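/- arXiv:1510.08212 — 2 statements merged into one kernel-verified Lean document; each statement's English description precedes it below -/
import Mathlib

section
/- For every p ≥ 4, every 2p-dimensional 2-step nilpotent symplectic Lie algebra over K (K = ℝ or ℂ) with characteristic sequence (2,2,1,…,1) is decomposable; more precisely, it is the direct product of a Lie algebra of dimension at most 7 with a nonzero abelian ideal. -/
/-- A symplectic form on a Lie algebra `g` over `K`: a `K`-bilinear form which is
alternating, nondegenerate and closed, i.e.
`θ ⁅X,Y⁆ Z + θ ⁅Y,Z⁆ X + θ ⁅Z,X⁆ Y = 0` for all `X Y Z`. -/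
def IsSymplecticForm (K : Type*) [RCLike K] (g : Type*) [LieRing g] [LieAlgebra K g]
    (θ : g → g → K) : Prop :=
  (∀ (a : K) (X Y Z : g), θ (a • X + Y) Z = a * θ X Z + θ Y Z) ∧
  (∀ (a : K) (X Y Z : g), θ X (a • Y + Z) = a * θ X Y + θ X Z) ∧
  (∀ X : g, θ X X = 0) ∧
  (∀ X : g, (∀ Y : g, θ X Y = 0) → X = 0) ∧
  (∀ X Y Z : g, θ ⁅X, Y⁆ Z + θ ⁅Y, Z⁆ X + θ ⁅Z, X⁆ Y = 0)
/-- A Lie algebra is 2-step nilpotent if `[[g,g],g] = 0` and `[g,g] ≠ 0`. -/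
def IsTwoStepNilpotent (g : Type*) [LieRing g] : Prop :=
  (∀ X Y Z : g, ⁅⁅X, Y⁆, Z⁆ = 0) ∧ ∃ X Y : g, ⁅X, Y⁆ ≠ 0
/-- A 2-step nilpotent Lie algebra has characteristic sequence `(2,…,2,1,…,1)` with exactly
`k` twos iff the maximum of `rank (ad X) = dim ⁅X, g⁆` over `X ∈ g \ [g,g]` equals `k`. -/
def HasCharSeqTwos (K : Type*) [RCLike K] (g : Type*) [LieRing g] [LieAlgebra K g]
    (k : ℕ) : Prop :=
  (∀ X : g, X ∉ LieAlgebra.derivedSeries K g 1 →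
      Module.finrank K ↥(LinearMap.range (LieAlgebra.ad K g X)) ≤ k) ∧
  ∃ X : g, X ∉ LieAlgebra.derivedSeries K g 1 ∧
      Module.finrank K ↥(LinearMap.range (LieAlgebra.ad K g X)) = k

/-!
Let `x` be an element of maximal `ad`-rank, which is at most two.

If `[g, g] = [x, g]`, then for `z` in the orthogonal `[g, g]ᗮ` for the closed form `θ` the form
`(u, v) ↦ θ ([z, u], v)` is symmetric on `g / [g, g]ᗮ`, and it vanishes only if `z` is central. As
`dim [g, g] ≤ 2`, these forms lie in a space of dimension at most `3`, so the center has
codimension at most `2 + 3`.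

If `[a, b] ∉ [x, g]` for some `a, b`, then the centralizer of `x` has codimension at most two, and
comparing the maps `ad (a + k)` and `ad (b + k)` for `k` in it shows that it is `K x + Z(g)`. Hence
the center has codimension at most `3`, and `dim [g, g] ≤ 3` because the bracket factors through
`⋀² (g / Z(g))`.

A complement of `[g, g] ∩ Z(g)` in `Z(g)` is an abelian direct factor of `g`. The complementary
ideal has dimension at most `dim (g / Z(g)) + dim [g, g] ≤ 7`, so this factor is nonzero when
`dim g ≥ 8`.
-/

open Module LieAlgebra

section LinearAlgebra

variable {K V W : Type*} [Field K] [AddCommGroup V] [Module K V] [AddCommGroup W] [Module K W]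
  [FiniteDimensional K W]

/- If `B k ∉ A.range`, choose `c` outside the spectrum of the compression of `B` to `A.range`:
the range of `B - c • A` then projects onto `A.range` with `B k` in the kernel. -/
lemma apply_mem_range_of_forall_finrank_range_sub_smul_le [Infinite K] {A B : V →ₗ[K] W}
    (h : ∀ c : K, finrank K (B - c • A).range ≤ finrank K A.range) {k : V} (hk : A k = 0) :
    B k ∈ A.range := by
  by_contra hBk
  obtain ⟨p, hp, hpk⟩ := LinearMap.exists_extend_of_notMem LinearMap.id hBk 0
  obtain ⟨s, hs⟩ := A.rangeRestrict.exists_rightInverse_of_surjective A.range_rangeRestrict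
  have hpA (w : A.range) : p (A (s w)) = w := by
    have hAs : A (s w) = w := congrArg Subtype.val (LinearMap.congr_fun hs w)
    rw [hAs]
    exact LinearMap.congr_fun hp w
  obtain ⟨c, hc⟩ := (End.finite_spectrum (p ∘ₗ B ∘ₗ s)).exists_notMem
  let q := p.domRestrict (B - c • A).range
  have hrange : q.range = ⊤ := by
    rw [spectrum.notMem_iff, End.isUnit_iff] at hc
    refine LinearMap.range_eq_top.2 fun w ↦ ?_
    obtain ⟨u, rfl⟩ := hc.surjective w
    refine ⟨⟨_, -s u, rfl⟩, ?_⟩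
    simp [q, hpA, algebraMap_end_apply, neg_add_eq_sub]
  have hker : q.ker ≠ ⊥ := by
    refine (Submodule.ne_bot_iff _).2 ⟨⟨B k, k, by simp [hk]⟩, hpk, fun h0 ↦ hBk ?_⟩
    rw [show B k = 0 from congrArg Subtype.val h0]
    exact A.range.zero_mem
  have hrank := q.finrank_range_add_finrank_ker
  rw [hrange, finrank_top] at hrank
  have hker_pos := Submodule.one_le_finrank_iff.2 hker
  have := h c
  omega

lemma finrank_le_finrank_ker_add_choose_of_forall_isSymm [FiniteDimensional K V]
    {F : V →ₗ[K] LinearMap.BilinForm K W} (hF : ∀ v, (F v).IsSymm) :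
    finrank K V ≤ finrank K F.ker + (finrank K W + 1).choose 2 := by
  let b := finBasis K W
  let entries : V →ₗ[K] Sym2 (Fin (finrank K W)) → K :=
    { toFun v s := F v (b s.out.1) (b s.out.2)
      map_add' _ _ := by ext; simp
      map_smul' _ _ := by ext; simp }
  have hker : entries.ker ≤ F.ker := by
    refine fun v hv ↦ LinearMap.BilinForm.ext_basis b fun i j ↦ ?_
    have hij : F v (b s(i, j).out.1) (b s(i, j).out.2) = 0 := congrFun hv s(i, j)
    have hout : s(s(i, j).out.1, s(i, j).out.2) = s(i, j) := Quot.out_eq _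
    obtain ⟨h₁, h₂⟩ | ⟨h₁, h₂⟩ := Sym2.eq_iff.1 hout
    · rwa [h₁, h₂] at hij
    · rw [h₁, h₂] at hij
      exact ((hF v).eq _ _).trans hij
  have hrange : finrank K entries.range ≤ (finrank K W + 1).choose 2 := by
    simpa [Sym2.card] using Submodule.finrank_le entries.range
  have hrank := entries.finrank_range_add_finrank_ker
  have := Submodule.finrank_mono hker
  omega

end LinearAlgebra

section LieAlgebra

variable {K g : Type*} [Field K] [LieRing g] [LieAlgebra K g]

lemma mem_center_iff_forall_lie_eq_zero {z : g} :
    z ∈ center K g ↔ ∀ x : g, ⁅z, x⁆ = 0 := by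
  refine (LieModule.mem_maxTrivSubmodule K g g z).trans (forall_congr' fun x ↦ ?_)
  rw [← lie_skew, neg_eq_zero]

lemma derivedSeries_one_toSubmodule_le_iff {S : Submodule K g} :
    (derivedSeries K g 1).toSubmodule ≤ S ↔ ∀ x y : g, ⁅x, y⁆ ∈ S := by
  rw [show (derivedSeries K g 1).toSubmodule = _ from coe_derivedSeries_one_eq K g,
    Submodule.span_le]
  exact ⟨fun h x y ↦ h ⟨x, y, rfl⟩, by rintro h _ ⟨x, y, rfl⟩; exact h x y⟩

lemma lie_mem_derivedSeries_one (x y : g) : ⁅x, y⁆ ∈ derivedSeries K g 1 :=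
  derivedSeries_one_toSubmodule_le_iff.1 le_rfl x y

variable [FiniteDimensional K g]

variable (K g) in
/- Any subspace that contains `[g, g]`, or consists of central elements, is an ideal. -/
lemma exists_isCompl_lieIdeal_le_center : ∃ I J : LieIdeal K g, IsCompl I J ∧ J ≤ center K g ∧
    finrank K I + finrank K (center K g) ≤ finrank K g + finrank K (derivedSeries K g 1) := by
  let D := (derivedSeries K g 1).toSubmodule
  let Z := (center K g).toSubmodule
  obtain ⟨J, hDJ, hJ⟩ := IsModularLattice.exists_disjoint_and_sup_eq (inf_le_right : D ⊓ Z ≤ Z)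
  have hJZ : J ≤ Z := hJ ▸ le_sup_right
  rw [disjoint_assoc, inf_eq_right.2 hJZ] at hDJ
  obtain ⟨I, hDI, hIJ⟩ := hDJ.exists_isCompl
  obtain ⟨I, rfl⟩ : ∃ I' : LieIdeal K g, I'.toSubmodule = I :=
    (Submodule.exists_lieSubmodule_coe_eq_iff g I).2
      fun x y _ ↦ hDI (lie_mem_derivedSeries_one x y)
  obtain ⟨J, rfl⟩ : ∃ J' : LieIdeal K g, J'.toSubmodule = J :=
    (Submodule.exists_lieSubmodule_coe_eq_iff g J).2 fun x z hz ↦ by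
      rw [(LieModule.mem_maxTrivSubmodule K g g z).1 (hJZ hz) x]
      exact J.zero_mem
  refine ⟨I, J, LieSubmodule.isCompl_toSubmodule.1 hIJ, hJZ, ?_⟩
  have hg := Submodule.finrank_add_eq_of_isCompl hIJ
  have hZ := Submodule.finrank_add_le_finrank_add_finrank (D ⊓ Z) J.toSubmodule
  rw [hJ] at hZ
  have hD := Submodule.finrank_mono (inf_le_left : D ⊓ Z ≤ D)
  change finrank K I.toSubmodule + finrank K Z ≤ _ + finrank K D
  omega

lemma finrank_derivedSeries_one_le_choose {C : Submodule K g}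
    (hC : Codisjoint C (center K g).toSubmodule) :
    finrank K (derivedSeries K g 1) ≤ (finrank K C).choose 2 := by
  let bracket : C [⋀^Fin 2]→ₗ[K] g :=
    { toFun v := ⁅(v 0 : g), (v 1 : g)⁆
      map_update_add' v i x y := by fin_cases i <;> simp
      map_update_smul' v i c x := by fin_cases i <;> simp
      map_eq_zero_of_eq' v i j h hij := by
        fin_cases i <;> fin_cases j <;> simp_all }
  let f := exteriorPower.alternatingMapLinearEquiv bracket
  have hle : (derivedSeries K g 1).toSubmodule ≤ f.range := by
    refine derivedSeries_one_toSubmodule_le_iff.2 fun x y ↦ ?_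
    obtain ⟨c, z, hc, hz, rfl⟩ := Submodule.codisjoint_iff_exists_add_eq.1 hC x
    obtain ⟨c', z', hc', hz', rfl⟩ := Submodule.codisjoint_iff_exists_add_eq.1 hC y
    refine ⟨exteriorPower.ιMulti K 2 ![⟨c, hc⟩, ⟨c', hc'⟩], ?_⟩
    rw [lie_add, add_lie, add_lie, mem_center_iff_forall_lie_eq_zero.1 hz,
      mem_center_iff_forall_lie_eq_zero.1 hz,
      (LieModule.mem_maxTrivSubmodule K g g z').1 hz']
    simp [f, bracket]
  calc finrank K (derivedSeries K g 1) ≤ finrank K f.range := Submodule.finrank_mono hle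
    _ ≤ finrank K (⋀[K]^2 C) := f.finrank_range_le
    _ = (finrank K C).choose 2 := exteriorPower.finrank_eq K 2

end LieAlgebra

section ClosedForm

variable {K g : Type*} [Field K] [LieRing g] [LieAlgebra K g]

/-- A bilinear form on a Lie algebra is closed if its Chevalley–Eilenberg differential vanishes.
The form is not required to be alternating. -/
def IsClosedForm (B : LinearMap.BilinForm K g) : Prop :=
  ∀ x y z : g, B ⁅x, y⁆ z + B ⁅y, z⁆ x + B ⁅z, x⁆ y = 0

namespace IsClosedForm

variable {B : LinearMap.BilinForm K g}

lemma apply_lie_comm (hB : IsClosedForm B) {z : g}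
    (hz : z ∈ B.orthogonal (derivedSeries K g 1).toSubmodule) (x y : g) :
    B ⁅z, x⁆ y = B ⁅z, y⁆ x := by
  have hxy : B ⁅x, y⁆ z = 0 := hz _ (lie_mem_derivedSeries_one x y)
  have hcl := hB z x y
  rw [hxy, add_zero, ← lie_skew y z, map_neg, LinearMap.neg_apply] at hcl
  exact add_neg_eq_zero.1 hcl

/- For `z ∈ [g, g]ᗮ` the form `(x, y) ↦ B ⁅z, x⁆ y` is symmetric and has `[g, g]ᗮ` in its radical,
so it is determined by its restriction to a complement of `[g, g]ᗮ`. -/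
lemma mem_center_of_forall_apply_lie_eq_zero (hB : IsClosedForm B) (hsep : B.SeparatingLeft)
    {C : Submodule K g}
    (hC : Codisjoint (B.orthogonal (derivedSeries K g 1).toSubmodule) C) {z : g}
    (hz : z ∈ B.orthogonal (derivedSeries K g 1).toSubmodule)
    (hzC : ∀ x ∈ C, ∀ y ∈ C, B ⁅z, x⁆ y = 0) : z ∈ center K g := by
  have extend {x : g} (hx : ∀ c ∈ C, B ⁅z, x⁆ c = 0) (y : g) : B ⁅z, x⁆ y = 0 := by
    obtain ⟨u, c, hu, hc, rfl⟩ := Submodule.codisjoint_iff_exists_add_eq.1 hC y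
    rw [map_add, hx c hc, hu _ (lie_mem_derivedSeries_one z x), add_zero]
  refine mem_center_iff_forall_lie_eq_zero.2 fun x ↦ hsep _ (extend fun c hc ↦ ?_)
  rw [hB.apply_lie_comm hz]
  exact extend (hzC c hc) x

theorem finrank_le (hB : IsClosedForm B) (hsep : B.SeparatingLeft) [FiniteDimensional K g] :
    finrank K g ≤ finrank K (center K g) + finrank K (derivedSeries K g 1) +
      (finrank K (derivedSeries K g 1) + 1).choose 2 := by
  let D := (derivedSeries K g 1).toSubmodule
  obtain ⟨C, hC⟩ := (B.orthogonal D).exists_isCompl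
  let F : B.orthogonal D →ₗ[K] LinearMap.BilinForm K C :=
    { toFun z := B.compl₁₂ (ad K g z ∘ₗ C.subtype) C.subtype
      map_add' _ _ := by ext; simp
      map_smul' _ _ := by ext; simp }
  have hF (z : B.orthogonal D) : (F z).IsSymm := ⟨fun x y ↦ hB.apply_lie_comm z.2 x y⟩
  have hker : F.ker.map (B.orthogonal D).subtype ≤ (center K g).toSubmodule := by
    rintro _ ⟨z, hz, rfl⟩
    exact hB.mem_center_of_forall_apply_lie_eq_zero hsep hC.codisjoint z.2 fun x hx y hy ↦
      LinearMap.congr_fun₂ hz ⟨x, hx⟩ ⟨y, hy⟩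
  have hkerZ := Submodule.finrank_mono hker
  rw [Submodule.finrank_map_subtype_eq] at hkerZ
  have hsymm := finrank_le_finrank_ker_add_choose_of_forall_isSymm hF
  have hDg : finrank K g ≤ finrank K D + finrank K (B.orthogonal D) :=
    LinearMap.BilinForm.finrank_add_finrank_orthogonal' (B := B) D ▸ Nat.le_add_right _ _
  have hCg := Submodule.finrank_add_eq_of_isCompl hC
  have hchoose : (finrank K C + 1).choose 2 ≤ (finrank K D + 1).choose 2 :=
    Nat.choose_le_choose 2 (by omega)
  change _ ≤ finrank K (center K g).toSubmodule + finrank K D + (finrank K D + 1).choose 2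
  omega

end IsClosedForm

end ClosedForm

section MaximalAdRank

variable {K g : Type*} [Field K] [LieRing g] [LieAlgebra K g]

variable (K) in
/-- The rank of `ad x` is maximal. In a 2-step nilpotent Lie algebra this rank is the number of
twos in the characteristic sequence. -/
def HasMaximalAdRank (x : g) : Prop :=
  ∀ y : g, finrank K (ad K g y).range ≤ finrank K (ad K g x).range

variable [FiniteDimensional K g]

variable (K g) in
lemma exists_hasMaximalAdRank : ∃ x : g, HasMaximalAdRank K x := by
  have hbdd : BddAbove (Set.range fun x : g ↦ finrank K (ad K g x).range) :=
    ⟨finrank K g, by rintro _ ⟨x, rfl⟩; exact Submodule.finrank_le _⟩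
  obtain ⟨x, hx⟩ := Nat.sSup_mem (Set.range_nonempty _) hbdd
  exact ⟨x, fun y ↦ (le_csSup hbdd ⟨y, rfl⟩).trans_eq hx.symm⟩

namespace HasMaximalAdRank

variable [Infinite K] {x a b h k : g}

lemma lie_mem_range_ad (hx : HasMaximalAdRank K x) (hk : ⁅x, k⁆ = 0) (y : g) :
    ⁅y, k⁆ ∈ (ad K g x).range :=
  apply_mem_range_of_forall_finrank_range_sub_smul_le (A := ad K g x) (B := ad K g y)
    (fun c ↦ by rw [← map_smul, ← map_sub]; exact hx (y - c • x)) hk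

lemma lie_mem_range_ad' (hx : HasMaximalAdRank K x) (hk : ⁅x, k⁆ = 0) (y : g) :
    ⁅k, y⁆ ∈ (ad K g x).range := by
  rw [← lie_skew]
  exact neg_mem (hx.lie_mem_range_ad hk y)

/- `[a, g]` is at most two-dimensional and not contained in `[x, g]`, hence meets it in at most a
line, and this line contains both `⁅x, a⁆ ≠ 0` and `⁅a, k⁆`. -/
lemma lie_mem_span_lie (hx : HasMaximalAdRank K x) (ha : finrank K (ad K g a).range ≤ 2)
    (hab : ⁅a, b⁆ ∉ (ad K g x).range) (hk : ⁅x, k⁆ = 0) : ⁅a, k⁆ ∈ K ∙ ⁅x, a⁆ := by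
  have hxa : ⁅x, a⁆ ≠ 0 := fun h ↦ hab (hx.lie_mem_range_ad' h b)
  let L := (ad K g a).range ⊓ (ad K g x).range
  have hL : finrank K L < finrank K (ad K g a).range :=
    Submodule.finrank_lt_finrank_of_lt (inf_le_left.lt_of_not_ge fun hle ↦ hab (hle ⟨b, rfl⟩).2)
  have hspan : K ∙ ⁅x, a⁆ = L := by
    refine Submodule.eq_of_le_of_finrank_le ?_ ?_
    · exact (Submodule.span_singleton_le_iff_mem _ _).2 ⟨⟨-x, by simp⟩, ⟨a, rfl⟩⟩
    · rw [finrank_span_singleton hxa]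
      omega
  rw [hspan]
  exact ⟨⟨k, rfl⟩, hx.lie_mem_range_ad hk a⟩

lemma linearIndependent_lie_pair (hx : HasMaximalAdRank K x)
    (hab : ⁅a, b⁆ ∉ (ad K g x).range) : LinearIndependent K ![⁅x, a⁆, ⁅x, b⁆] := by
  refine LinearIndependent.pair_iff.2 fun s t hst ↦ ?_
  have hk : ⁅x, s • a + t • b⁆ = 0 := by simpa using hst
  have hs : s • ⁅a, b⁆ ∈ (ad K g x).range := by simpa using hx.lie_mem_range_ad' hk b
  have ht : t • ⁅a, b⁆ ∈ (ad K g x).range := by simpa using hx.lie_mem_range_ad hk a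
  constructor <;> by_contra h0
  · exact hab ((Submodule.smul_mem_iff _ h0).1 hs)
  · exact hab ((Submodule.smul_mem_iff _ h0).1 ht)

lemma span_pair_sup_ker_ad_eq_top (hx : HasMaximalAdRank K x)
    (hx₂ : finrank K (ad K g x).range ≤ 2) (hab : ⁅a, b⁆ ∉ (ad K g x).range) :
    Submodule.span K {a, b} ⊔ (ad K g x).ker = ⊤ := by
  have hmap : (Submodule.span K {a, b}).map (ad K g x) = (ad K g x).range := by
    refine Submodule.eq_of_le_of_finrank_le LinearMap.map_le_range (hx₂.trans_eq ?_)
    rw [Submodule.map_span, Set.image_pair, ad_apply, ad_apply,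
      ← Matrix.range_cons_cons_empty _ _ ![],
      finrank_span_eq_card (hx.linearIndependent_lie_pair hab), Fintype.card_fin]
  rw [← Submodule.comap_map_eq, hmap]
  exact eq_top_iff.2 fun y _ ↦ ⟨y, rfl⟩

lemma exists_lie_add_smul_eq_zero (hx : HasMaximalAdRank K x)
    (hx₂ : finrank K (ad K g x).range ≤ 2) (hab : ⁅a, b⁆ ∉ (ad K g x).range) (hk : ⁅x, k⁆ = 0) :
    ∃ c : K, ⁅a, k + c • x⁆ = 0 ∧ ⁅b, k + c • x⁆ = 0 := by
  have hmem {u v : g} (huv : ⁅u, v⁆ ∉ (ad K g x).range) : ∃ c : K, c • ⁅x, u⁆ = ⁅u, k⁆ :=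
    Submodule.mem_span_singleton.1 (hx.lie_mem_span_lie ((hx u).trans hx₂) huv hk)
  obtain ⟨l, hl⟩ := hmem hab
  obtain ⟨m, hm⟩ := hmem (u := b) (v := a) (by rwa [← lie_skew, neg_mem_iff])
  obtain ⟨n, hn⟩ := hmem (u := a + b) (v := b) (by simpa using hab)
  have hrel : (l - n) • ⁅x, a⁆ + (m - n) • ⁅x, b⁆ = 0 := by
    rw [add_lie, ← hl, ← hm, lie_add] at hn
    rw [← sub_eq_zero.2 hn.symm]
    module
  obtain ⟨hln, hmn⟩ := LinearIndependent.pair_iff.1 (hx.linearIndependent_lie_pair hab) _ _ hrel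
  refine ⟨n, ?_, ?_⟩
  · rw [lie_add, lie_smul, ← hl, sub_eq_zero.1 hln, ← lie_skew x a, smul_neg, neg_add_cancel]
  · rw [lie_add, lie_smul, ← hm, sub_eq_zero.1 hmn, ← lie_skew x b, smul_neg, neg_add_cancel]

/- For `k` in the centralizer of `x`, both `a + k, b` and `b + k, a` are again pairs whose bracket
avoids `[x, g]`, so `⁅k, h⁆` lies on the lines through `⁅x, a⁆` and through `⁅x, b⁆`. -/
lemma mem_center_of_lie_eq_zero (hx : HasMaximalAdRank K x)
    (hx₂ : finrank K (ad K g x).range ≤ 2) (hab : ⁅a, b⁆ ∉ (ad K g x).range)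
    (hxh : ⁅x, h⁆ = 0) (hah : ⁅a, h⁆ = 0) (hbh : ⁅b, h⁆ = 0) : h ∈ center K g := by
  have hmem {u v : g} (huv : ⁅u, v⁆ ∉ (ad K g x).range) (huh : ⁅u, h⁆ = 0) (k : g)
      (hk : ⁅x, k⁆ = 0) : ∃ c : K, c • ⁅x, u⁆ = ⁅k, h⁆ := by
    have hukv : ⁅u + k, v⁆ ∉ (ad K g x).range := by
      rwa [add_lie, Submodule.add_mem_iff_left _ (hx.lie_mem_range_ad' hk v)]
    have := hx.lie_mem_span_lie ((hx (u + k)).trans hx₂) hukv hxh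
    rw [add_lie, huh, zero_add, lie_add, hk, add_zero] at this
    exact Submodule.mem_span_singleton.1 this
  have hcentralizer : (ad K g x).ker ≤ (ad K g h).ker := fun k hk ↦ by
    obtain ⟨s, hs⟩ := hmem hab hah k hk
    obtain ⟨t, ht⟩ := hmem (u := b) (v := a) (by rwa [← lie_skew, neg_mem_iff]) hbh k hk
    have hst : s • ⁅x, a⁆ + (-t) • ⁅x, b⁆ = 0 := by rw [hs, neg_smul, ht, add_neg_cancel]
    have hs₀ := (LinearIndependent.pair_iff.1 (hx.linearIndependent_lie_pair hab) _ _ hst).1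
    rw [LinearMap.mem_ker, ad_apply, ← lie_skew, ← hs, hs₀, zero_smul, neg_zero]
  have htop : (ad K g h).ker = ⊤ := by
    rw [eq_top_iff, ← hx.span_pair_sup_ker_ad_eq_top hx₂ hab]
    refine sup_le (Submodule.span_le.2 ?_) hcentralizer
    rintro _ (rfl | rfl)
    · rw [SetLike.mem_coe, LinearMap.mem_ker, ad_apply, ← lie_skew, hah, neg_zero]
    · rw [SetLike.mem_coe, LinearMap.mem_ker, ad_apply, ← lie_skew, hbh, neg_zero]
  exact mem_center_iff_forall_lie_eq_zero.2 fun y ↦ LinearMap.mem_ker.1 (htop ▸ Submodule.mem_top)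

lemma ker_ad_le_span_sup_center (hx : HasMaximalAdRank K x)
    (hx₂ : finrank K (ad K g x).range ≤ 2) (hab : ⁅a, b⁆ ∉ (ad K g x).range) :
    (ad K g x).ker ≤ K ∙ x ⊔ (center K g).toSubmodule := fun k hk ↦ by
  obtain ⟨c, ha, hb⟩ := hx.exists_lie_add_smul_eq_zero hx₂ hab hk
  have hxk : ⁅x, k + c • x⁆ = 0 := by
    rw [lie_add, lie_smul, lie_self, smul_zero, add_zero]
    exact hk
  refine Submodule.mem_sup.2 ⟨-c • x, Submodule.mem_span_singleton.2 ⟨-c, rfl⟩, k + c • x,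
    hx.mem_center_of_lie_eq_zero hx₂ hab hxk ha hb, ?_⟩
  rw [neg_smul, neg_add_eq_sub, add_sub_cancel_right]

theorem finrank_le_finrank_center_add_three (hx : HasMaximalAdRank K x)
    (hx₂ : finrank K (ad K g x).range ≤ 2) (hab : ⁅a, b⁆ ∉ (ad K g x).range) :
    finrank K g ≤ finrank K (center K g) + 3 := by
  have hker := (Submodule.finrank_mono (hx.ker_ad_le_span_sup_center hx₂ hab)).trans
    (Submodule.finrank_add_le_finrank_add_finrank _ _)
  have hspan : finrank K (K ∙ x) ≤ 1 := by simpa using finrank_span_le_card (R := K) {x}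
  have hrank := (ad K g x).finrank_range_add_finrank_ker
  change _ ≤ finrank K (center K g).toSubmodule + 3
  omega

end HasMaximalAdRank

end MaximalAdRank

section Bounds

variable {K g : Type*} [Field K] [Infinite K] [LieRing g] [LieAlgebra K g] [FiniteDimensional K g]

theorem finrank_add_finrank_derivedSeries_one_le
    (hrank : ∀ x : g, finrank K (ad K g x).range ≤ 2)
    {B : LinearMap.BilinForm K g} (hB : IsClosedForm B) (hsep : B.SeparatingLeft) :
    finrank K g + finrank K (derivedSeries K g 1) ≤ finrank K (center K g) + 7 := by
  obtain ⟨x, hx⟩ := exists_hasMaximalAdRank K g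
  by_cases hD : (derivedSeries K g 1).toSubmodule ≤ (ad K g x).range
  · have hD₂ : finrank K (derivedSeries K g 1) ≤ 2 := (Submodule.finrank_mono hD).trans (hrank x)
    have hg := hB.finrank_le hsep
    have hchoose : (finrank K (derivedSeries K g 1) + 1).choose 2 ≤ 3 :=
      Nat.choose_le_choose (b := 3) 2 (by omega)
    omega
  · rw [derivedSeries_one_toSubmodule_le_iff] at hD
    push Not at hD
    obtain ⟨a, b, hab⟩ := hD
    have hg := hx.finrank_le_finrank_center_add_three (hrank x) hab
    obtain ⟨C, hC⟩ := (center K g).toSubmodule.exists_isCompl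
    have hCg : finrank K (center K g) + finrank K C = finrank K g :=
      Submodule.finrank_add_eq_of_isCompl hC
    have hD₃ := finrank_derivedSeries_one_le_choose hC.symm.codisjoint
    have hchoose : (finrank K C).choose 2 ≤ 3 := Nat.choose_le_choose (b := 3) 2 (by omega)
    omega

theorem decomposable_of_charSeqTwo_symplectic_general (hdim : 7 < finrank K g)
    (hrank : ∀ x : g, finrank K (ad K g x).range ≤ 2)
    {B : LinearMap.BilinForm K g} (hB : IsClosedForm B) (hsep : B.SeparatingLeft) :
    ∃ I J : LieIdeal K g, IsCompl I J ∧ finrank K I ≤ 7 ∧ J ≠ ⊥ ∧ J ≤ center K g := by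
  obtain ⟨I, J, hIJ, hJ, hI⟩ := exists_isCompl_lieIdeal_le_center K g
  have hbound := finrank_add_finrank_derivedSeries_one_le hrank hB hsep
  have hI₇ : finrank K I ≤ 7 := by omega
  refine ⟨I, J, hIJ, hI₇, ?_, hJ⟩
  rintro rfl
  have hI_top : finrank K I = finrank K g := by
    rw [eq_top_of_isCompl_bot hIJ]
    exact finrank_top K g
  omega

end Bounds

section CharSeq

variable {K g : Type*} [RCLike K] [LieRing g] [LieAlgebra K g]

lemma HasCharSeqTwos.finrank_range_ad_le {k : ℕ} (hc : HasCharSeqTwos K g k)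
    (hg : IsTwoStepNilpotent g) (x : g) : finrank K (ad K g x).range ≤ k := by
  by_cases hx : x ∈ derivedSeries K g 1
  · have hD : (derivedSeries K g 1).toSubmodule ≤ (center K g).toSubmodule :=
      derivedSeries_one_toSubmodule_le_iff.2 fun y z ↦
        mem_center_iff_forall_lie_eq_zero.2 (hg.1 y z)
    have had : ad K g x = 0 :=
      LinearMap.ext (mem_center_iff_forall_lie_eq_zero.1 (hD hx))
    have hrange : LinearMap.range (0 : End K g) = ⊥ := LinearMap.range_zero
    rw [had, hrange, finrank_bot]
    exact Nat.zero_le k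
  · exact hc.1 x hx

namespace IsSymplecticForm

variable {θ : g → g → K}

/-- A symplectic form as a bundled bilinear form. -/
def toBilinForm (hθ : IsSymplecticForm K g θ) : LinearMap.BilinForm K g :=
  have zero_left (Y : g) : θ 0 Y = 0 := by simpa using hθ.1 (-1) 0 0 Y
  have zero_right (X : g) : θ X 0 = 0 := by simpa using hθ.2.1 (-1) X 0 0
  LinearMap.mk₂ K θ (fun X Y Z ↦ by simpa using hθ.1 1 X Y Z)
    (fun a X Y ↦ by simpa [zero_left] using hθ.1 a X 0 Y)
    (fun X Y Z ↦ by simpa using hθ.2.1 1 X Y Z)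
    (fun a X Y ↦ by simpa [zero_right] using hθ.2.1 a X Y 0)

lemma isClosedForm_toBilinForm (hθ : IsSymplecticForm K g θ) : IsClosedForm hθ.toBilinForm :=
  hθ.2.2.2.2

lemma separatingLeft_toBilinForm (hθ : IsSymplecticForm K g θ) :
    hθ.toBilinForm.SeparatingLeft :=
  hθ.2.2.2.1

end IsSymplecticForm

end CharSeq

/-- For every `p ≥ 4`, every `2p`-dimensional 2-step nilpotent symplectic Lie algebra over
`K` with characteristic sequence `(2,2,1,…,1)` is decomposable; more precisely it is the
direct product of a Lie algebra of dimension at most 7 with a nonzero abelian ideal. -/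
theorem decomposable_of_charSeqTwo_symplectic
    (K : Type*) [RCLike K] (g : Type*) [LieRing g] [LieAlgebra K g] [FiniteDimensional K g]
    (p : ℕ) (hp : 4 ≤ p)
    (h2 : IsTwoStepNilpotent g) (hdim : Module.finrank K g = 2 * p)
    (hc : HasCharSeqTwos K g 2)
    (θ : g → g → K) (hθ : IsSymplecticForm K g θ) :
    ∃ I J : LieIdeal K g, I ⊓ J = ⊥ ∧ I ⊔ J = ⊤ ∧
      Module.finrank K ↥I ≤ 7 ∧ J ≠ ⊥ ∧ (∀ x ∈ J, ∀ y ∈ J, ⁅x, y⁆ = (0 : g)) := by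
  obtain ⟨I, J, hIJ, hI, hJ, hJZ⟩ := decomposable_of_charSeqTwo_symplectic_general (by omega)
    (hc.finrank_range_ad_le h2) hθ.isClosedForm_toBilinForm hθ.separatingLeft_toBilinForm
  exact ⟨I, J, hIJ.inf_eq_bot, hIJ.sup_eq_top, hI, hJ, fun x _ y hy ↦ hJZ hy x⟩
end

section
/- Let g be a 2-step nilpotent symplectic Lie algebra over K (K = ℝ or ℂ) with characteristic sequence (2,…,2,1,…,1) containing exactly k twos. If dim g > k(k+5)/2, then g is decomposable: it is the direct product of a Lie algebra of dimension k(k+5)/2 with a nonzero abelian ideal. -/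
/-!
Let `D = [g, g]`, let `Z` be the center and `k` the largest rank of `ad X`. Any subspace of `Z` that
meets `D` trivially splits off, so it suffices to show
`dim D + dim g ≤ 2 * k + (k + 1).choose 2 + dim Z`.

Fix a general point `X`, let `S = [X, g]`, let `r` be the largest rank of `ad y` modulo `S` and
write `k = r + s + 1`. Ranks can only drop under specialization, so `[y, ker (ad X)] ⊆ S` for all
`y`. Peeling off images of `ad` modulo `S` one at a time gives `dim D ≤ k + (r + 1).choose 2`. There
are two bounds for `dim g`.

* `dim g = dim D + dim D^⊥`. For `u ∈ D^⊥` the form `(x, y) ↦ θ y [x, u]` is symmetric and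
  determines `u` modulo `Z`. The maps `ad y` have rank at most `s` on `D^⊥ ∩ ker (ad X)`, so
  `dim D^⊥ ≤ k + (s + 1).choose 2 + dim Z`. This settles the cases `r = 0` and `r + 1 ≤ 2 * s`.
* The space `F = ker (ad X) ∩ S^⊥` has codimension at most `2 * k`, and closedness of `θ` forces
  `[y, F] ⊆ ker (θ X)` for all `y`. Cutting `F` down by the centralizers of further general points
  shrinks the space which contains all products with it, until that space lies in the common image
  `T` of all `ad x` of rank `k`. What remains of `F` lies in `{u | [g, u] ⊆ T}`, where the symmetric
  form above gives a bound again: `dim F ≤ r * s + (s + 1).choose 2 + dim Z` when `2 * s ≤ r`.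
-/

open Filter Module

section Pencils

variable {K U W : Type*} [Field K] [AddCommGroup U] [Module K U] [AddCommGroup W] [Module K W]

theorem eventually_injective_add_smul [FiniteDimensional K U] {f : U →ₗ[K] W}
    (hf : Function.Injective f) (g : U →ₗ[K] W) :
    ∀ᶠ t : K in cofinite, Function.Injective (f + t • g) := by
  obtain ⟨φ, hφ⟩ := f.exists_leftInverse_of_injective (LinearMap.ker_eq_bot.2 hf)
  have hinj : Function.Injective fun t : K => -t⁻¹ := neg_injective.comp inv_injective
  have hev : ∀ᶠ μ : K in cofinite, ¬ End.HasEigenvalue (φ ∘ₗ g) μ := by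
    simpa using End.finite_hasEigenvalue (φ ∘ₗ g)
  filter_upwards [hinj.tendsto_cofinite.eventually hev] with t ht
  refine (injective_iff_map_eq_zero _).2 fun u hu => by_contra fun hu0 => ht ?_
  have hφu : u + t • φ (g u) = 0 := by
    simpa [show φ (f u) = u from LinearMap.congr_fun hφ u] using congrArg φ hu
  have ht0 : t ≠ 0 := by
    rintro rfl
    exact hu0 (by simpa using hφu)
  refine End.hasEigenvalue_of_hasEigenvector ⟨End.mem_eigenspace_iff.2 ?_, hu0⟩
  rw [LinearMap.comp_apply, neg_smul, eq_neg_iff_add_eq_zero, add_comm, ← smul_right_inj ht0]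
  simpa [smul_smul, ht0] using hφu

theorem exists_comp_eq_subtype_range (f : U →ₗ[K] W) :
    ∃ σ : LinearMap.range f →ₗ[K] U, f ∘ₗ σ = (LinearMap.range f).subtype := by
  obtain ⟨σ, hσ⟩ := f.rangeRestrict.exists_rightInverse_of_surjective f.range_rangeRestrict
  exact ⟨σ, LinearMap.ext fun w => congrArg Subtype.val (LinearMap.congr_fun hσ w)⟩

variable [FiniteDimensional K W]

theorem eventually_finrank_range_le_finrank_range_add_smul (f g : U →ₗ[K] W) :
    ∀ᶠ t : K in cofinite,
      finrank K (LinearMap.range f) ≤ finrank K (LinearMap.range (f + t • g)) := by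
  obtain ⟨σ, hσ⟩ := exists_comp_eq_subtype_range f
  have hinj : Function.Injective (f ∘ₗ σ) := by simp [hσ]
  filter_upwards [eventually_injective_add_smul hinj (g ∘ₗ σ)] with t ht
  rw [← LinearMap.finrank_range_of_inj ht, ← LinearMap.smul_comp, ← LinearMap.add_comp]
  exact Submodule.finrank_mono (LinearMap.range_comp_le_range _ _)

-- Otherwise `g u` and the images of lifts of a basis of `range f` show that the rank jumps.
theorem apply_mem_range_of_finrank_range_add_smul_le [Infinite K] {f g : U →ₗ[K] W}
    (hle : ∀ t : K, finrank K (LinearMap.range (f + t • g)) ≤ finrank K (LinearMap.range f))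
    {u : U} (hu : f u = 0) : g u ∈ LinearMap.range f := by
  by_contra hgu
  have hgu0 : g u ≠ 0 := fun h => hgu (h ▸ zero_mem _)
  obtain ⟨σ, hσ⟩ := exists_comp_eq_subtype_range f
  let F : LinearMap.range f × K →ₗ[K] W := (f ∘ₗ σ).coprod (LinearMap.toSpanSingleton K W (g u))
  let G : LinearMap.range f × K →ₗ[K] W := (g ∘ₗ σ).coprod 0
  have hF : Function.Injective F := by
    rw [← LinearMap.ker_eq_bot, LinearMap.ker_coprod_of_disjoint_range, hσ, Submodule.ker_subtype,
      LinearMap.ker_toSpanSingleton K hgu0, Submodule.prod_bot]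
    rw [hσ, Submodule.range_subtype, LinearMap.range_toSpanSingleton]
    exact (Submodule.disjoint_span_singleton' hgu0).2 hgu
  obtain ⟨t, htinj, ht0⟩ :=
    ((eventually_injective_add_smul hF G).and (eventually_cofinite_ne 0)).exists
  have hrange : LinearMap.range (F + t • G) ≤ LinearMap.range (f + t • g) := by
    rintro _ ⟨⟨w, c⟩, rfl⟩
    refine ⟨σ w + (t⁻¹ * c) • u, ?_⟩
    have hcancel : t • g ((t⁻¹ * c) • u) = c • g u := by
      rw [map_smul, smul_smul, mul_inv_cancel_left₀ ht0]
    simp only [LinearMap.add_apply, LinearMap.smul_apply, map_add, map_smul f, hu, smul_zero,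
      add_zero, hcancel, F, G, LinearMap.coprod_apply, LinearMap.comp_apply,
      LinearMap.toSpanSingleton_apply, LinearMap.zero_apply]
    abel
  have hrank := LinearMap.finrank_range_of_inj htinj
  rw [finrank_prod, finrank_self] at hrank
  have := (Submodule.finrank_mono hrange).trans (hle t)
  omega

end Pencils

section Generic

variable {K V : Type*} [Field K] [AddCommGroup V] [Module K V]

variable (K) in
/-- A set of *generic* points of a vector space: it is nonempty, and it contains cofinitely many
points of every line through one of its points. It stands for a nonempty Zariski open set, over a
field that need not carry a topology. -/
def IsGeneric (s : Set V) : Prop :=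
  s.Nonempty ∧ ∀ x ∈ s, ∀ y, ∀ᶠ t : K in cofinite, x + t • y ∈ s

theorem IsGeneric.inter [Infinite K] {s t : Set V} (hs : IsGeneric K s) (ht : IsGeneric K t) :
    IsGeneric K (s ∩ t) := by
  refine ⟨?_, fun x hx y => (hs.2 x hx.1 y).and (ht.2 x hx.2 y)⟩
  obtain ⟨⟨x, hx⟩, ⟨y, hy⟩⟩ := And.intro hs.1 ht.1
  have hinj : Function.Injective fun c : K => 1 - c := sub_right_injective
  obtain ⟨c, hcs, hct⟩ := ((hs.2 x hx (y - x)).and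
    (hinj.tendsto_cofinite.eventually (ht.2 y hy (x - y)))).exists
  refine ⟨_, hcs, ?_⟩
  convert hct using 1
  module

theorem isGeneric_setOf_apply_ne_zero {W : Type*} [AddCommGroup W] [Module K W] {f : V →ₗ[K] W}
    (hf : ∃ x, f x ≠ 0) : IsGeneric K {x | f x ≠ 0} := by
  refine ⟨hf, fun x hx y => ?_⟩
  have hroot : {t : K | f x + t • f y = 0}.Subsingleton := by
    intro t ht u hu
    have hsub : (t - u) • f y = 0 := by
      rw [sub_smul, ← add_sub_add_left_eq_sub _ _ (f x), ht, hu, sub_zero]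
    refine sub_eq_zero.1 ((smul_eq_zero.1 hsub).resolve_right fun hy => hx ?_)
    simpa [hy] using ht
  filter_upwards [hroot.finite.compl_mem_cofinite] with t ht
  simpa using ht

theorem isGeneric_setOf_apply_self_ne_zero {q : V →ₗ[K] V →ₗ[K] K} (hq : ∃ x, q x x ≠ 0) :
    IsGeneric K {x | q x x ≠ 0} := by
  refine ⟨hq, fun x hx y => ?_⟩
  let p : Polynomial K := .C (q x x) + .C (q x y + q y x) * .X + .C (q y y) * .X ^ 2
  have hp : p ≠ 0 := fun h => hx (by simpa [p] using congrArg (Polynomial.eval 0) h)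
  filter_upwards [(Polynomial.finite_setOfPred_isRoot hp).compl_mem_cofinite] with t ht heq
  refine ht ?_
  simp only [map_add, map_smul, LinearMap.add_apply, LinearMap.smul_apply, smul_eq_mul] at heq
  simp only [Set.mem_ofPred_eq, Polynomial.IsRoot, Polynomial.eval_add, Polynomial.eval_mul,
    Polynomial.eval_C, Polynomial.eval_X, Polynomial.eval_pow, p]
  linear_combination heq

end Generic

section GenericRank

variable {K V U W : Type*} [Field K] [AddCommGroup V] [Module K V] [AddCommGroup U] [Module K U]
  [AddCommGroup W] [Module K W]

/-- The largest rank in the linear family `x ↦ Φ x` of linear maps. It is meaningful when the ranks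
are bounded, e.g. when `W` is finite-dimensional. -/
noncomputable def genericRank (Φ : V →ₗ[K] U →ₗ[K] W) : ℕ :=
  ⨆ x, finrank K (LinearMap.range (Φ x))

/-- A point of the parameter space at which a linear family of linear maps has largest rank. -/
def IsRegularPoint (Φ : V →ₗ[K] U →ₗ[K] W) (x : V) : Prop :=
  finrank K (LinearMap.range (Φ x)) = genericRank Φ

theorem range_compr₂_apply {W' : Type*} [AddCommGroup W'] [Module K W'] (Φ : V →ₗ[K] U →ₗ[K] W)
    (f : W →ₗ[K] W') (x : V) :
    LinearMap.range (Φ.compr₂ f x) = (LinearMap.range (Φ x)).map f :=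
  LinearMap.range_comp (Φ x) f

theorem range_domRestrict₂_apply (Φ : V →ₗ[K] U →ₗ[K] W) (E : Submodule K U) (x : V) :
    LinearMap.range (Φ.domRestrict₂ E x) = E.map (Φ x) :=
  LinearMap.range_domRestrict E (Φ x)

variable [FiniteDimensional K W] (Φ : V →ₗ[K] U →ₗ[K] W)

theorem finrank_range_le_genericRank (x : V) :
    finrank K (LinearMap.range (Φ x)) ≤ genericRank Φ :=
  le_ciSup (f := fun x => finrank K (LinearMap.range (Φ x)))
    ⟨finrank K W, Set.forall_mem_range.2 fun _ => Submodule.finrank_le _⟩ x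

theorem isGeneric_setOf_isRegularPoint : IsGeneric K {x | IsRegularPoint Φ x} := by
  refine ⟨?_, fun x hx y => ?_⟩
  · exact Nat.sSup_mem (Set.range_nonempty _)
      ⟨finrank K W, Set.forall_mem_range.2 fun _ => Submodule.finrank_le _⟩
  · filter_upwards [eventually_finrank_range_le_finrank_range_add_smul (Φ x) (Φ y)] with t ht
    refine (finrank_range_le_genericRank Φ _).antisymm ?_
    rw [map_add, map_smul]
    exact hx.symm.trans_le ht

variable {Φ}

theorem IsRegularPoint.finrank_map_le {E : Submodule K U} {x : V}
    (hx : IsRegularPoint (Φ.domRestrict₂ E) x) (y : V) :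
    finrank K (E.map (Φ y)) ≤ finrank K (E.map (Φ x)) := by
  rw [← range_domRestrict₂_apply, ← range_domRestrict₂_apply, hx]
  exact finrank_range_le_genericRank _ y

variable [Infinite K]

theorem genericRank_le {s : Set V} (hs : IsGeneric K s) {n : ℕ}
    (h : ∀ x ∈ s, finrank K (LinearMap.range (Φ x)) ≤ n) : genericRank Φ ≤ n := by
  obtain ⟨x, hxs, hx⟩ := (hs.inter (isGeneric_setOf_isRegularPoint Φ)).1
  exact hx.symm.trans_le (h x hxs)

theorem finrank_map_le_of_isGeneric {s : Set V} (hs : IsGeneric K s) {E : Submodule K U} {n : ℕ}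
    (h : ∀ x ∈ s, finrank K (E.map (Φ x)) ≤ n) (x : V) : finrank K (E.map (Φ x)) ≤ n := by
  rw [← range_domRestrict₂_apply]
  refine (finrank_range_le_genericRank _ x).trans (genericRank_le hs fun y hy => ?_)
  rw [range_domRestrict₂_apply]
  exact h y hy

theorem IsRegularPoint.apply_mem_range {x : V} (hx : IsRegularPoint Φ x) {u : U}
    (hu : Φ x u = 0) (y : V) : Φ y u ∈ LinearMap.range (Φ x) := by
  refine apply_mem_range_of_finrank_range_add_smul_le (fun t => ?_) hu
  rw [← map_smul, ← map_add, hx]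
  exact finrank_range_le_genericRank Φ _

end GenericRank

section Dimension

variable {K V W : Type*} [Field K] [AddCommGroup V] [Module K V] [AddCommGroup W] [Module K W]
  [FiniteDimensional K V]

theorem finrank_map_add_finrank_inf_ker (f : V →ₗ[K] W) (E : Submodule K V) :
    finrank K (E.map f) + finrank K (E ⊓ LinearMap.ker f : Submodule K V) = finrank K E := by
  rw [← LinearMap.range_domRestrict, ← LinearMap.finrank_range_add_finrank_ker (f.domRestrict E),
    LinearMap.ker_domRestrict, ← Submodule.map_comap_subtype,
    LinearEquiv.finrank_eq (Submodule.equivMapOfInjective _ E.injective_subtype _)]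

theorem finrank_map_mkQ_add_finrank_inf (S E : Submodule K V) :
    finrank K (E.map S.mkQ) + finrank K (E ⊓ S : Submodule K V) = finrank K E := by
  have h := finrank_map_add_finrank_inf_ker S.mkQ E
  rwa [Submodule.ker_mkQ] at h

theorem finrank_inf_ker_lt {P : Submodule K V} {f : V →ₗ[K] W} {v : V} (hv : v ∈ P)
    (hfv : f v ≠ 0) : finrank K (P ⊓ LinearMap.ker f : Submodule K V) < finrank K P :=
  Submodule.finrank_lt_finrank_of_lt <| inf_le_left.lt_of_not_ge fun h => hfv (h hv).2

theorem finrank_le_finrank_inf_ker_add_one (E : Submodule K V) (f : Dual K V) :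
    finrank K E ≤ finrank K (E ⊓ LinearMap.ker f : Submodule K V) + 1 := by
  have hmap := finrank_map_add_finrank_inf_ker f E
  have hle := (Submodule.finrank_le (E.map f)).trans_eq (finrank_self K)
  omega

end Dimension

section SpanOfValues

variable {K V W : Type*} [Field K] [Infinite K] [AddCommGroup V] [Module K V] [AddCommGroup W]
  [Module K W] [FiniteDimensional K W]

theorem genericRank_compr₂_mkQ_range_lt {c : V →ₗ[K] V →ₗ[K] W}
    (hc : ∀ x y, c x y ∈ LinearMap.range (c y)) {x : V} (hx : c x ≠ 0) :
    genericRank (c.compr₂ (LinearMap.range (c x)).mkQ) < genericRank c := by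
  have hgen : IsGeneric K {y | c x y ≠ 0} :=
    isGeneric_setOf_apply_ne_zero (by simpa [LinearMap.ext_iff] using hx)
  obtain ⟨y, hy⟩ := hgen.1
  have hlt : ∀ y ∈ {y | c x y ≠ 0},
      finrank K (LinearMap.range (c.compr₂ (LinearMap.range (c x)).mkQ y)) < genericRank c := by
    intro y hy
    refine lt_of_lt_of_le ?_ (finrank_range_le_genericRank c y)
    rw [range_compr₂_apply, ← finrank_map_mkQ_add_finrank_inf (LinearMap.range (c x))]
    refine Nat.lt_add_of_pos_right (Module.finrank_pos_iff_exists_ne_zero.2 ?_)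
    exact ⟨⟨c x y, hc x y, LinearMap.mem_range_self _ _⟩, fun h => hy (congrArg Subtype.val h)⟩
  exact (genericRank_le hgen fun y hy => Nat.le_pred_of_lt (hlt y hy)).trans_lt
    (Nat.pred_lt_of_lt (hlt y hy))

theorem add_one_choose_two (n : ℕ) : (n + 1).choose 2 = n + n.choose 2 := by
  rw [Nat.choose_succ_succ', Nat.choose_one_right]

theorem finrank_map₂_top_le {c : V →ₗ[K] V →ₗ[K] W}
    (hc : ∀ x y, c x y ∈ LinearMap.range (c y)) :
    finrank K (Submodule.map₂ c ⊤ ⊤) ≤ (genericRank c + 1).choose 2 := by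
  induction hr : genericRank c using Nat.strong_induction_on generalizing W with | _ r ih
  subst hr
  by_cases hzero : ∀ x, c x = 0
  · have hbot : Submodule.map₂ c ⊤ ⊤ = ⊥ :=
      eq_bot_iff.2 (Submodule.map₂_le.2 fun x _ y _ => by simp [hzero x])
    rw [hbot, finrank_bot]
    exact Nat.zero_le _
  obtain ⟨x, hx⟩ := not_forall.1 hzero
  have hlt := genericRank_compr₂_mkQ_range_lt hc hx
  have hquot := ih _ hlt (fun u v => ?_) rfl
  · have hdim := finrank_map_mkQ_add_finrank_inf (LinearMap.range (c x)) (Submodule.map₂ c ⊤ ⊤)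
    rw [Submodule.map_map₂] at hdim
    have hinf : finrank K (Submodule.map₂ c ⊤ ⊤ ⊓ LinearMap.range (c x) : Submodule K W)
        ≤ genericRank c :=
      (Submodule.finrank_mono inf_le_right).trans (finrank_range_le_genericRank c x)
    have hmono := Nat.choose_le_choose 2 (Nat.add_one_le_iff.2 hlt)
    rw [add_one_choose_two]
    omega
  · obtain ⟨w, hw⟩ := hc u v
    exact ⟨w, congrArg (LinearMap.range (c x)).mkQ hw⟩

end SpanOfValues

section CommonImage

variable {K V U W : Type*} [Field K] [AddCommGroup V] [Module K V] [AddCommGroup U] [Module K U]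
  [AddCommGroup W] [Module K W]

theorem finrank_le_finrank_inf_iInf_ker_add [FiniteDimensional K U] {ι : Type*} (s : Finset ι)
    (f : ι → U →ₗ[K] W) (G : Submodule K U) {n : ℕ} (hn : ∀ i ∈ s, finrank K (G.map (f i)) ≤ n) :
    finrank K G ≤
      finrank K (G ⊓ ⨅ i ∈ s, LinearMap.ker (f i) : Submodule K U) + s.card * n := by
  classical
  induction s using Finset.induction_on with
  | empty =>
    have htop : ⨅ i ∈ (∅ : Finset ι), LinearMap.ker (f i) = ⊤ := by simp
    rw [htop, inf_top_eq]
    exact Nat.le_add_right _ _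
  | insert i s hi ih =>
    have hs := ih fun j hj => hn j (Finset.mem_insert_of_mem hj)
    have hker := finrank_map_add_finrank_inf_ker (f i) (G ⊓ ⨅ j ∈ s, LinearMap.ker (f j))
    have hmap := (Submodule.finrank_mono (Submodule.map_mono (f := f i)
      (inf_le_left : G ⊓ ⨅ j ∈ s, LinearMap.ker (f j) ≤ G))).trans
        (hn i (Finset.mem_insert_self i s))
    rw [Finset.iInf_insert, inf_left_comm, inf_comm, Finset.card_insert_of_notMem hi, add_one_mul]
    omega

/-- The intersection of the images of the maps of largest rank in a linear family. -/
def commonImage (Φ : V →ₗ[K] U →ₗ[K] W) : Submodule K W :=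
  ⨅ (x) (_ : IsRegularPoint Φ x), LinearMap.range (Φ x)

/-- The vectors which every member of a linear family maps into `commonImage Φ`. When `Φ` is a Lie
bracket with `commonImage Φ` an ideal, this is the preimage of the center of the quotient. -/
def commonImagePreimage (Φ : V →ₗ[K] U →ₗ[K] W) : Submodule K U :=
  ⨅ y, (commonImage Φ).comap (Φ y)

variable {Φ : V →ₗ[K] U →ₗ[K] W}

theorem mem_commonImage {w : W} :
    w ∈ commonImage Φ ↔ ∀ x, IsRegularPoint Φ x → w ∈ LinearMap.range (Φ x) := by
  simp only [commonImage, Submodule.mem_iInf]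

theorem mem_commonImagePreimage {u : U} :
    u ∈ commonImagePreimage Φ ↔ ∀ y, Φ y u ∈ commonImage Φ := by
  simp only [commonImagePreimage, Submodule.mem_iInf, Submodule.mem_comap]

theorem commonImage_le_range {x : V} (hx : IsRegularPoint Φ x) :
    commonImage Φ ≤ LinearMap.range (Φ x) :=
  fun _ hw => mem_commonImage.1 hw x hx

-- As long as some regular `x` has `P ⊄ range (Φ x)`, replacing `G` by `G ⊓ ker (Φ x)` and `P` by
-- `P ⊓ range (Φ x)` costs at most `dim P - 1` dimensions of `G`.
theorem finrank_add_choose_two_le_finrank_inf_commonImagePreimage_add [Infinite K]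
    [FiniteDimensional K U] [FiniteDimensional K W] {G : Submodule K U} {P : Submodule K W}
    (hGP : ∀ y, G.map (Φ y) ≤ P) :
    finrank K G + (finrank K (P ⊓ commonImage Φ : Submodule K W)).choose 2 ≤
      finrank K (G ⊓ commonImagePreimage Φ : Submodule K U) + (finrank K P).choose 2 := by
  induction hp : finrank K P using Nat.strong_induction_on generalizing G P with | _ p ih
  subst hp
  by_cases hP : P ≤ commonImage Φ
  · have hG : G ≤ commonImagePreimage Φ := fun u hu =>
      mem_commonImagePreimage.2 fun y => hP (hGP y (Submodule.mem_map_of_mem hu))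
    rw [inf_eq_left.2 hP, inf_eq_left.2 hG]
  obtain ⟨x, hx, hPx⟩ : ∃ x, IsRegularPoint Φ x ∧ ¬ P ≤ LinearMap.range (Φ x) := by
    simpa only [commonImage, le_iInf_iff, not_forall, exists_prop] using hP
  set S := LinearMap.range (Φ x)
  set G' := G ⊓ LinearMap.ker (Φ x)
  have hlt : finrank K (P ⊓ S : Submodule K W) < finrank K P :=
    Submodule.finrank_lt_finrank_of_lt <|
      inf_le_left.lt_of_not_ge fun h => hPx (h.trans inf_le_right)
  have hG' : ∀ y, G'.map (Φ y) ≤ P ⊓ S := by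
    rintro y _ ⟨u, hu, rfl⟩
    exact ⟨hGP y (Submodule.mem_map_of_mem hu.1), hx.apply_mem_range hu.2 y⟩
  have hrec := ih _ hlt hG' rfl
  rw [inf_assoc, inf_eq_right.2 (commonImage_le_range hx)] at hrec
  have hker : finrank K (G.map (Φ x)) + finrank K G' = finrank K G :=
    finrank_map_add_finrank_inf_ker (Φ x) G
  have hmap : finrank K (G.map (Φ x)) ≤ finrank K (P ⊓ S : Submodule K W) :=
    Submodule.finrank_mono (le_inf (hGP x) (LinearMap.map_le_range))
  have hmono : finrank K (G' ⊓ commonImagePreimage Φ : Submodule K U) ≤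
      finrank K (G ⊓ commonImagePreimage Φ : Submodule K U) :=
    Submodule.finrank_mono (inf_le_inf_right _ inf_le_left)
  have hchoose := Nat.choose_le_choose 2 (Nat.add_one_le_iff.2 hlt)
  rw [add_one_choose_two] at hchoose
  omega

end CommonImage

/-- An alternating product `b` and a nondegenerate alternating form `θ` which is closed for `b`.
For a Lie bracket `b` this says that `θ` is a symplectic form on the Lie algebra; the Jacobi
identity is not required. -/
structure IsSymplecticProduct {K V : Type*} [Field K] [AddCommGroup V] [Module K V]
    (b : V →ₗ[K] V →ₗ[K] V) (θ : LinearMap.BilinForm K V) : Prop where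
  isAlt : b.IsAlt
  form_isAlt : θ.IsAlt
  form_nondegenerate : θ.Nondegenerate
  closed : ∀ x y z, θ (b x y) z + θ (b y z) x + θ (b z x) y = 0

namespace IsSymplecticProduct

variable {K V : Type*} [Field K] [AddCommGroup V] [Module K V] {b : V →ₗ[K] V →ₗ[K] V}
  {θ : LinearMap.BilinForm K V}

theorem cyclic (h : IsSymplecticProduct b θ) (x y z : V) :
    θ x (b y z) + θ y (b z x) + θ z (b x y) = 0 := by
  linear_combination -h.closed x y z - h.form_isAlt.neg_eq (b x y) z - h.form_isAlt.neg_eq (b y z) x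
    - h.form_isAlt.neg_eq (b z x) y

theorem mem_ker_of_forall_apply_eq_zero (h : IsSymplecticProduct b θ) {u : V}
    (hu : ∀ y, b y u = 0) : u ∈ LinearMap.ker b :=
  LinearMap.mem_ker.2 <| LinearMap.ext fun y => by
    rw [← h.isAlt.neg, hu, neg_zero, LinearMap.zero_apply]

theorem apply_apply_symm (h : IsSymplecticProduct b θ) {u : V}
    (hu : u ∈ θ.orthogonal (Submodule.map₂ b ⊤ ⊤)) (x y : V) : θ y (b x u) = θ x (b y u) := by
  have hperp : θ (b y x) u = 0 := hu _ (Submodule.apply_mem_map₂ b trivial trivial)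
  have hskew : θ x (b u y) = -θ x (b y u) := by rw [← h.isAlt.neg, map_neg]
  linear_combination h.cyclic y x u + h.form_isAlt.neg_eq (b y x) u + hperp - hskew

theorem mem_orthogonal_map₂_of_forall_apply_eq_zero (h : IsSymplecticProduct b θ)
    {C R S : Submodule K V} (hRC : Codisjoint R C) (hR : ∀ y, R.map (b y) ≤ S) {u : V}
    (huS : u ∈ θ.orthogonal S) (huC : ∀ c ∈ C, b c u = 0) :
    u ∈ θ.orthogonal (Submodule.map₂ b ⊤ ⊤) := by
  have hRu : ∀ y, ∀ a ∈ R, θ u (b y a) = 0 := fun y a ha => by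
    rw [← h.form_isAlt.neg_eq, huS _ (hR y (Submodule.mem_map_of_mem ha)), neg_zero]
  have hCu : ∀ c ∈ C, ∀ d ∈ C, θ u (b c d) = 0 := fun c hc d hd => by
    have hcyc := h.cyclic u c d
    rwa [huC d hd, ← h.isAlt.neg c u, huC c hc, neg_zero, map_zero, map_zero, add_zero,
      add_zero] at hcyc
  suffices hle : Submodule.map₂ b ⊤ ⊤ ≤ LinearMap.ker (θ u) from fun v hv => by
    rw [← h.form_isAlt.neg_eq, LinearMap.mem_ker.1 (hle hv), neg_zero]
  refine Submodule.map₂_le.2 fun x _ y _ => ?_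
  obtain ⟨a, c, ha, hc, rfl⟩ := Submodule.codisjoint_iff_exists_add_eq.1 hRC x
  obtain ⟨a', d, ha', hd, rfl⟩ := Submodule.codisjoint_iff_exists_add_eq.1 hRC y
  rw [LinearMap.mem_ker, map_add (b _), map_add (θ u), hRu _ a' ha', zero_add, map_add b,
    LinearMap.add_apply, map_add, hCu c hc d hd, add_zero, ← h.isAlt.neg, map_neg, hRu d a ha,
    neg_zero]

theorem exists_form_self_apply_ne_zero [NeZero (3 : K)] (h : IsSymplecticProduct b θ)
    (hb : b ≠ 0) : ∃ w x, θ x (b x w) ≠ 0 := by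
  by_contra! hzero
  have hskew : ∀ x y w, θ x (b y w) = -θ y (b x w) := by
    intro x y w
    have := hzero w (x + y)
    simp only [map_add, LinearMap.add_apply, hzero] at this
    linear_combination this
  refine hb (LinearMap.ext fun y => LinearMap.ext fun z => h.form_nondegenerate.2 _ fun x => ?_)
  have hyz : θ y (b z x) = θ x (b y z) := by
    rw [← h.isAlt.neg x z, map_neg, hskew y x z, neg_neg]
  have hzx : θ z (b x y) = θ x (b y z) := by
    rw [hskew z x y, ← h.isAlt.neg y z, map_neg, neg_neg]
  have hthree : (3 : K) * θ x (b y z) = 0 := by linear_combination h.cyclic x y z - hyz - hzx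
  exact (mul_eq_zero.1 hthree).resolve_left three_ne_zero

variable [FiniteDimensional K V]

theorem finrank_orthogonal_add (h : IsSymplecticProduct b θ) (S : Submodule K V) :
    finrank K (θ.orthogonal S) + finrank K S = finrank K V := by
  rw [LinearMap.BilinForm.finrank_orthogonal h.form_nondegenerate,
    Nat.sub_add_cancel (Submodule.finrank_le S)]

variable [Infinite K]

-- For `u` orthogonal to all products, `θ y (b x u)` is symmetric in `x` and `y`, and it vanishes
-- identically only if `u ∈ ker b`.
theorem finrank_le_choose_two_add (h : IsSymplecticProduct b θ) {E : Submodule K V}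
    (hE : E ≤ θ.orthogonal (Submodule.map₂ b ⊤ ⊤)) {n : ℕ}
    (hn : ∀ y, finrank K (E.map (b y)) ≤ n) :
    finrank K E ≤ (n + 1).choose 2 + finrank K (LinearMap.ker b) := by
  let c : V →ₗ[K] V →ₗ[K] Dual K E := LinearMap.mk₂ K (fun x y => θ y ∘ₗ (b x).domRestrict E)
    (by intros; ext; simp) (by intros; ext; simp) (by intros; ext; simp) (by intros; ext; simp)
  have hsymm : ∀ x y, c x y = c y x := fun x y =>
    LinearMap.ext fun u => h.apply_apply_symm (hE u.2) x y
  have hrank : genericRank c ≤ n := by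
    refine ciSup_le fun x => le_trans ?_ (hn x)
    rw [← LinearMap.range_domRestrict,
      ← LinearMap.finrank_range_dualMap_eq_finrank_range ((b x).domRestrict E)]
    exact Submodule.finrank_mono (LinearMap.range_comp_le_range θ ((b x).domRestrict E).dualMap)
  have hspan := (finrank_map₂_top_le fun x y => hsymm x y ▸ LinearMap.mem_range_self (c y) x).trans
    (Nat.choose_le_choose 2 (Nat.add_le_add_right hrank 1))
  have hcoann : (Submodule.map₂ c ⊤ ⊤).dualCoannihilator.map E.subtype ≤ LinearMap.ker b := by
    rintro _ ⟨u, hu, rfl⟩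
    refine h.mem_ker_of_forall_apply_eq_zero fun x => h.form_nondegenerate.2 _ fun y => ?_
    exact (Submodule.mem_dualCoannihilator _).1 hu _
      (Submodule.apply_mem_map₂ c (m := x) (n := y) trivial trivial)
  have hker := Submodule.finrank_mono hcoann
  rw [LinearEquiv.finrank_eq (Submodule.equivMapOfInjective _ E.injective_subtype _).symm] at hker
  have := Subspace.finrank_add_finrank_dualCoannihilator_eq (Submodule.map₂ c ⊤ ⊤)
  omega

theorem finrank_le_mul_add_choose_two_add (h : IsSymplecticProduct b θ) {G R S : Submodule K V}
    (hG : G ≤ θ.orthogonal S) (hR : ∀ y, R.map (b y) ≤ S) {n : ℕ}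
    (hn : ∀ y, finrank K (G.map (b y)) ≤ n) :
    finrank K G ≤
      finrank K (V ⧸ R) * n + (n + 1).choose 2 + finrank K (LinearMap.ker b) := by
  obtain ⟨C, hRC⟩ := R.exists_isCompl
  let e := finBasis K C
  have hle := finrank_le_finrank_inf_iInf_ker_add Finset.univ (fun i => b (e i)) G
    fun i _ => hn (e i)
  set G' := G ⊓ ⨅ i ∈ Finset.univ, LinearMap.ker (b (e i))
  have hperp : G' ≤ θ.orthogonal (Submodule.map₂ b ⊤ ⊤) := by
    intro u hu
    refine h.mem_orthogonal_map₂_of_forall_apply_eq_zero hRC.codisjoint hR (hG hu.1) fun c hc => ?_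
    have hzero : (b.flip u).domRestrict C = 0 := e.ext fun i =>
      (Submodule.mem_iInf _).1 ((Submodule.mem_iInf _).1 hu.2 i) (Finset.mem_univ i)
    exact LinearMap.congr_fun hzero ⟨c, hc⟩
  have hG' := h.finrank_le_choose_two_add hperp fun y =>
    (Submodule.finrank_mono (Submodule.map_mono inf_le_left)).trans (hn y)
  rw [Finset.card_univ, Fintype.card_fin,
    ← (Submodule.quotientEquivOfIsCompl R C hRC).finrank_eq] at hle
  omega

end IsSymplecticProduct

section GeneralPoint

variable {K V : Type*} [Field K] [AddCommGroup V] [Module K V]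

/-- The largest dimension of the image of `b y` modulo the image of `b X`, as `y` varies. -/
noncomputable def transverseRank (b : V →ₗ[K] V →ₗ[K] V) (X : V) : ℕ :=
  genericRank (b.compr₂ (LinearMap.range (b X)).mkQ)

/-- The centralizer of `X` intersected with the orthogonal of `[X, V]`, for the product `b` and the
form `θ`. -/
def orthogonalCentralizer (b : V →ₗ[K] V →ₗ[K] V) (θ : LinearMap.BilinForm K V) (X : V) :
    Submodule K V :=
  LinearMap.ker (b X) ⊓ θ.orthogonal (LinearMap.range (b X))

/-- A point `X` in general position for the product `b` and the form `θ`: all the conditions hold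
on a generic set of points. -/
structure IsGeneralPoint (b : V →ₗ[K] V →ₗ[K] V) (θ : LinearMap.BilinForm K V) (X : V) : Prop where
  isRegularPoint : IsRegularPoint b X
  isRegularPoint_domRestrict₂ : IsRegularPoint (b.domRestrict₂ (commonImagePreimage b)) X
  exists_form_self_ne_zero : ∃ w, θ X (b X w) ≠ 0
  le_ker_or_exists_form_ne_zero : commonImagePreimage b ≤ LinearMap.ker b ∨
    ∃ y, ∃ z ∈ commonImagePreimage b, θ X (b y z) ≠ 0

/-- A point `y` in general position with respect to `X`, for the product `b` and the form `θ`. -/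
structure IsGeneralPartner (b : V →ₗ[K] V →ₗ[K] V) (θ : LinearMap.BilinForm K V) (X y : V) :
    Prop where
  isRegularPoint : IsRegularPoint b y
  isRegularPoint_compr₂ : IsRegularPoint (b.compr₂ (LinearMap.range (b X)).mkQ) y
  form_ne_zero : θ X (b X y) ≠ 0

variable {b : V →ₗ[K] V →ₗ[K] V} {θ : LinearMap.BilinForm K V} {X : V}

theorem apply_mem_range_inf_range (hb : b.IsAlt) (x y : V) :
    b x y ∈ LinearMap.range (b x) ⊓ LinearMap.range (b y) :=
  ⟨LinearMap.mem_range_self _ _, -x, by rw [map_neg, hb.neg]⟩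

variable [FiniteDimensional K V]

theorem IsGeneralPartner.finrank_inf_add {y : V} (hy : IsGeneralPartner b θ X y) :
    finrank K (LinearMap.range (b X) ⊓ LinearMap.range (b y) : Submodule K V) +
      transverseRank b X = genericRank b := by
  rw [transverseRank, ← hy.isRegularPoint_compr₂, range_compr₂_apply, add_comm, inf_comm,
    finrank_map_mkQ_add_finrank_inf, hy.isRegularPoint]

theorem IsGeneralPartner.finrank_inf_ker_add_lt (hb : b.IsAlt) {y : V}
    (hy : IsGeneralPartner b θ X y) :
    finrank K (LinearMap.range (b X) ⊓ LinearMap.range (b y) ⊓ LinearMap.ker (θ X) :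
      Submodule K V) + transverseRank b X < genericRank b := by
  rw [← hy.finrank_inf_add]
  exact Nat.add_lt_add_right
    (finrank_inf_ker_lt (apply_mem_range_inf_range hb X y) hy.form_ne_zero) _

variable [Infinite K]

theorem IsSymplecticProduct.exists_isGeneralPoint [NeZero (3 : K)] (h : IsSymplecticProduct b θ)
    (hb : b ≠ 0) : ∃ X, IsGeneralPoint b θ X := by
  obtain ⟨w, x, hwx⟩ := h.exists_form_self_apply_ne_zero hb
  have hgen := ((isGeneric_setOf_isRegularPoint b).inter (isGeneric_setOf_isRegularPoint
    (b.domRestrict₂ (commonImagePreimage b)))).inter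
      (isGeneric_setOf_apply_self_ne_zero (q := θ.compl₂ (b.flip w)) ⟨x, hwx⟩)
  by_cases hN : commonImagePreimage b ≤ LinearMap.ker b
  · obtain ⟨X, ⟨hX, hXN⟩, hXw⟩ := hgen.1
    exact ⟨X, hX, hXN, ⟨w, hXw⟩, .inl hN⟩
  obtain ⟨z, hz, hbz⟩ := SetLike.not_le_iff_exists.1 hN
  obtain ⟨y, hyz⟩ := not_forall.1 (mt h.mem_ker_of_forall_apply_eq_zero hbz)
  obtain ⟨v, hv⟩ := not_forall.1 (mt (h.form_nondegenerate.2 (b y z)) hyz)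
  obtain ⟨X, ⟨⟨hX, hXN⟩, hXw⟩, hXz⟩ :=
    (hgen.inter (isGeneric_setOf_apply_ne_zero (f := θ.flip (b y z)) ⟨v, hv⟩)).1
  exact ⟨X, hX, hXN, ⟨w, hXw⟩, .inr ⟨y, z, hz, hXz⟩⟩

theorem IsGeneralPoint.isGeneric_setOf_isGeneralPartner (hX : IsGeneralPoint b θ X) :
    IsGeneric K {y | IsGeneralPartner b θ X y} := by
  convert ((isGeneric_setOf_isRegularPoint b).inter (isGeneric_setOf_isRegularPoint
    (b.compr₂ (LinearMap.range (b X)).mkQ))).inter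
      (isGeneric_setOf_apply_ne_zero (f := θ X ∘ₗ b X) hX.exists_form_self_ne_zero) using 1
  ext y
  exact ⟨fun h => ⟨⟨h.1, h.2⟩, h.3⟩, fun h => ⟨h.1.1, h.1.2, h.2⟩⟩

theorem IsRegularPoint.finrank_map₂_top_le_add (hb : b.IsAlt) (hX : IsRegularPoint b X) :
    finrank K (Submodule.map₂ b ⊤ ⊤) ≤ genericRank b + (transverseRank b X + 1).choose 2 := by
  have hdim := finrank_map_mkQ_add_finrank_inf (LinearMap.range (b X)) (Submodule.map₂ b ⊤ ⊤)
  rw [Submodule.map_map₂] at hdim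
  have hquot : finrank K (Submodule.map₂ (b.compr₂ (LinearMap.range (b X)).mkQ) ⊤ ⊤) ≤
      (transverseRank b X + 1).choose 2 := by
    refine finrank_map₂_top_le fun x y => ⟨-x, ?_⟩
    rw [map_neg, LinearMap.compr₂_apply, LinearMap.compr₂_apply, ← map_neg, hb.neg]
  have hinf : finrank K (Submodule.map₂ b ⊤ ⊤ ⊓ LinearMap.range (b X) : Submodule K V) ≤
      genericRank b :=
    (Submodule.finrank_mono inf_le_right).trans hX.le
  omega

theorem IsGeneralPoint.finrank_commonImage_add_lt (hb : b.IsAlt) (hX : IsGeneralPoint b θ X)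
    (hr : transverseRank b X ≠ 0) :
    finrank K (commonImage b) + transverseRank b X < genericRank b := by
  have hpartner := hX.isGeneric_setOf_isGeneralPartner
  have hne : ∃ y, ((commonImage b).mkQ ∘ₗ b X) y ≠ 0 := by
    by_contra! hle
    obtain ⟨y, hy⟩ := hpartner.1
    have hXy : LinearMap.range (b X) ≤ LinearMap.range (b y) := by
      rintro _ ⟨w, rfl⟩
      exact commonImage_le_range hy.isRegularPoint ((Submodule.Quotient.mk_eq_zero _).1 (hle w))
    have hdim := hy.finrank_inf_add
    rw [inf_eq_left.2 hXy, hX.isRegularPoint] at hdim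
    omega
  obtain ⟨y, hy, hyT⟩ := (hpartner.inter (isGeneric_setOf_apply_ne_zero hne)).1
  rw [← hy.finrank_inf_add]
  refine Nat.add_lt_add_right (Submodule.finrank_lt_finrank_of_lt ?_) _
  exact SetLike.lt_iff_le_and_exists.2
    ⟨le_inf (commonImage_le_range hX.isRegularPoint) (commonImage_le_range hy.isRegularPoint),
      b X y, apply_mem_range_inf_range hb X y,
      fun hmem => hyT ((Submodule.Quotient.mk_eq_zero _).2 hmem)⟩

end GeneralPoint

section Estimates

variable {K V : Type*} [Field K] [AddCommGroup V] [Module K V] {b : V →ₗ[K] V →ₗ[K] V}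
  {θ : LinearMap.BilinForm K V} {X : V}

theorem IsSymplecticProduct.map_orthogonalCentralizer_le_ker (h : IsSymplecticProduct b θ)
    (y : V) : (orthogonalCentralizer b θ X).map (b y) ≤ LinearMap.ker (θ X) := by
  rintro _ ⟨u, ⟨huX, huS⟩, rfl⟩
  have hcyc := h.cyclic X y u
  have huS' : θ u (b X y) = 0 := by
    rw [← h.form_isAlt.neg_eq, huS _ (LinearMap.mem_range_self _ _), neg_zero]
  rwa [← h.isAlt.neg X u, LinearMap.mem_ker.1 huX, neg_zero, map_zero, huS', add_zero,
    add_zero] at hcyc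

variable [FiniteDimensional K V]

theorem IsSymplecticProduct.finrank_le_finrank_orthogonalCentralizer_add
    (h : IsSymplecticProduct b θ) (hX : IsRegularPoint b X) :
    finrank K V ≤ finrank K (orthogonalCentralizer b θ X) + 2 * genericRank b := by
  have horth := h.finrank_orthogonal_add (LinearMap.range (b X))
  have hker := (b X).finrank_range_add_finrank_ker
  rw [hX] at horth hker
  have hsum := Submodule.finrank_sup_add_finrank_inf_eq (LinearMap.ker (b X))
    (θ.orthogonal (LinearMap.range (b X)))
  have hsup := Submodule.finrank_le
    (LinearMap.ker (b X) ⊔ θ.orthogonal (LinearMap.range (b X)))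
  rw [orthogonalCentralizer]
  omega

theorem finrank_quotient_ker_sup_add_finrank_map {W : Type*} [AddCommGroup W] [Module K W]
    (f : V →ₗ[K] W) (N : Submodule K V) :
    finrank K (V ⧸ (LinearMap.ker f ⊔ N)) + finrank K (N.map f) =
      finrank K (LinearMap.range f) := by
  have hmap := finrank_map_add_finrank_inf_ker f (LinearMap.ker f ⊔ N)
  rw [Submodule.map_sup, LinearMap.le_ker_iff_map.1 le_rfl, bot_sup_eq,
    inf_eq_right.2 le_sup_left] at hmap
  have hquot := (LinearMap.ker f ⊔ N).finrank_quotient_add_finrank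
  have hrank := f.finrank_range_add_finrank_ker
  omega

variable [Infinite K]

theorem IsSymplecticProduct.finrank_map_orthogonalCentralizer_add_lt (h : IsSymplecticProduct b θ)
    (hX : IsGeneralPoint b θ X) (y : V) :
    finrank K ((orthogonalCentralizer b θ X).map (b y)) + transverseRank b X < genericRank b := by
  have hpartner : ∀ y ∈ {y | IsGeneralPartner b θ X y},
      finrank K ((orthogonalCentralizer b θ X).map (b y)) + transverseRank b X < genericRank b := by
    intro y hy
    refine lt_of_le_of_lt (Nat.add_le_add_right (Submodule.finrank_mono (le_inf (le_inf ?_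
      LinearMap.map_le_range) (h.map_orthogonalCentralizer_le_ker y))) _)
      (hy.finrank_inf_ker_add_lt h.isAlt)
    rintro _ ⟨u, hu, rfl⟩
    exact hX.isRegularPoint.apply_mem_range hu.1 y
  have := finrank_map_le_of_isGeneric hX.isGeneric_setOf_isGeneralPartner
    (fun y hy => Nat.le_sub_one_of_lt (Nat.lt_sub_iff_add_lt.2 (hpartner y hy))) y
  obtain ⟨z, hz⟩ := hX.isGeneric_setOf_isGeneralPartner.1
  have := hpartner z hz
  omega

theorem IsSymplecticProduct.finrank_orthogonal_map₂_le (h : IsSymplecticProduct b θ)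
    (hX : IsGeneralPoint b θ X) {s : ℕ} (hs : genericRank b = transverseRank b X + s + 1) :
    finrank K (θ.orthogonal (Submodule.map₂ b ⊤ ⊤)) ≤
      genericRank b + (s + 1).choose 2 + finrank K (LinearMap.ker b) := by
  set E := θ.orthogonal (Submodule.map₂ b ⊤ ⊤) ⊓ LinearMap.ker (b X)
  have hle : E ≤ orthogonalCentralizer b θ X := le_inf inf_le_right <| inf_le_left.trans <|
    LinearMap.BilinForm.orthogonal_le <| by
      rintro _ ⟨w, rfl⟩
      exact Submodule.apply_mem_map₂ b trivial trivial
  have hrank : ∀ y, finrank K (E.map (b y)) ≤ s := fun y => by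
    have hmono := Submodule.finrank_mono (Submodule.map_mono (f := b y) hle)
    have := h.finrank_map_orthogonalCentralizer_add_lt hX y
    omega
  have hbound : finrank K E ≤ (s + 1).choose 2 + finrank K (LinearMap.ker b) :=
    h.finrank_le_choose_two_add inf_le_left hrank
  have hmap := (Submodule.finrank_mono (LinearMap.map_le_range (f := b X)
    (p := θ.orthogonal (Submodule.map₂ b ⊤ ⊤)))).trans_eq hX.isRegularPoint
  have hker : finrank K ((θ.orthogonal (Submodule.map₂ b ⊤ ⊤)).map (b X)) + finrank K E =
      finrank K (θ.orthogonal (Submodule.map₂ b ⊤ ⊤)) := finrank_map_add_finrank_inf_ker _ _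
  omega

theorem IsSymplecticProduct.finrank_inf_commonImagePreimage_le (h : IsSymplecticProduct b θ)
    (hX : IsGeneralPoint b θ X) (hN : ¬ commonImagePreimage b ≤ LinearMap.ker b) {κ : ℕ}
    (hκ : finrank K ((commonImagePreimage b).map (b X)) = κ + 1) :
    finrank K (orthogonalCentralizer b θ X ⊓ commonImagePreimage b : Submodule K V) ≤
      (genericRank b - (κ + 1)) * κ + (κ + 1).choose 2 + finrank K (LinearMap.ker b) := by
  set N := commonImagePreimage b
  obtain ⟨w, z, hz, hwz⟩ := hX.le_ker_or_exists_form_ne_zero.resolve_left hN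
  have hrank : ∀ y, finrank K ((orthogonalCentralizer b θ X ⊓ N).map (b y)) ≤ κ := by
    refine finrank_map_le_of_isGeneric (isGeneric_setOf_apply_ne_zero
      (f := θ X ∘ₗ b.flip z) ⟨w, hwz⟩) fun y hy => ?_
    have hle : (orthogonalCentralizer b θ X ⊓ N).map (b y) ≤ N.map (b y) ⊓ LinearMap.ker (θ X) :=
      le_inf (Submodule.map_mono inf_le_right) <|
        (Submodule.map_mono inf_le_left).trans (h.map_orthogonalCentralizer_le_ker y)
    have hlt := (Submodule.finrank_mono hle).trans_lt
      (finrank_inf_ker_lt (Submodule.mem_map_of_mem (f := b y) hz) hy)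
    have hmap : finrank K (N.map (b y)) ≤ κ + 1 :=
      hκ ▸ hX.isRegularPoint_domRestrict₂.finrank_map_le y
    omega
  have hR : ∀ y, (LinearMap.ker (b X) ⊔ N).map (b y) ≤ LinearMap.range (b X) := by
    intro y
    rw [Submodule.map_sup, sup_le_iff]
    constructor
    · rintro _ ⟨u, hu, rfl⟩
      exact hX.isRegularPoint.apply_mem_range hu y
    · rintro _ ⟨u, hu, rfl⟩
      exact commonImage_le_range hX.isRegularPoint (mem_commonImagePreimage.1 hu y)
  have hbound := h.finrank_le_mul_add_choose_two_add (inf_le_left.trans inf_le_right) hR hrank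
  have hquot := finrank_quotient_ker_sup_add_finrank_map (b X) N
  rwa [← hX.isRegularPoint, ← hquot, hκ, Nat.add_sub_cancel]

end Estimates

section CentralizerEstimate

variable {K V : Type*} [Field K] [AddCommGroup V] [Module K V] {b : V →ₗ[K] V →ₗ[K] V}
  {θ : LinearMap.BilinForm K V} {X : V} [FiniteDimensional K V]

theorem IsGeneralPoint.finrank_map_commonImagePreimage_pos (hX : IsGeneralPoint b θ X)
    (hN : ¬ commonImagePreimage b ≤ LinearMap.ker b) :
    0 < finrank K ((commonImagePreimage b).map (b X)) := by
  obtain ⟨w, z, hz, hwz⟩ := hX.le_ker_or_exists_form_ne_zero.resolve_left hN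
  exact (Nat.zero_le _).trans_lt <| (finrank_inf_ker_lt (Submodule.mem_map_of_mem hz) hwz).trans_le
    (hX.isRegularPoint_domRestrict₂.finrank_map_le w)

variable [Infinite K]

theorem IsSymplecticProduct.finrank_orthogonalCentralizer_add_choose_two_le
    (h : IsSymplecticProduct b θ) (hX : IsGeneralPoint b θ X) {s : ℕ}
    (hs : genericRank b = transverseRank b X + s + 1) :
    finrank K (orthogonalCentralizer b θ X) +
        (finrank K (commonImage b ⊓ LinearMap.ker (θ X) : Submodule K V)).choose 2 ≤
      finrank K (orthogonalCentralizer b θ X ⊓ commonImagePreimage b : Submodule K V) +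
        (s + 1).choose 2 := by
  obtain ⟨y, hy⟩ := hX.isGeneric_setOf_isGeneralPartner.1
  set F := orthogonalCentralizer b θ X
  set G := F ⊓ LinearMap.ker (b y)
  set P := LinearMap.range (b X) ⊓ LinearMap.range (b y) ⊓ LinearMap.ker (θ X)
  have hGP : ∀ w, G.map (b w) ≤ P := by
    refine fun w => le_inf (le_inf ?_ ?_)
      ((Submodule.map_mono inf_le_left).trans (h.map_orthogonalCentralizer_le_ker w)) <;>
      rintro _ ⟨u, hu, rfl⟩
    · exact hX.isRegularPoint.apply_mem_range hu.1.1 w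
    · exact hy.isRegularPoint.apply_mem_range hu.2 w
  have hPT : P ⊓ commonImage b = commonImage b ⊓ LinearMap.ker (θ X) := by
    rw [inf_right_comm, inf_eq_right.2
      (le_inf (commonImage_le_range hX.isRegularPoint) (commonImage_le_range hy.isRegularPoint))]
  have hP : finrank K P + transverseRank b X < genericRank b := hy.finrank_inf_ker_add_lt h.isAlt
  have hchain := finrank_add_choose_two_le_finrank_inf_commonImagePreimage_add hGP
  have hker : finrank K (F.map (b y)) + finrank K G = finrank K F :=
    finrank_map_add_finrank_inf_ker (b y) F
  have hmap : finrank K (F.map (b y)) + transverseRank b X < genericRank b :=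
    h.finrank_map_orthogonalCentralizer_add_lt hX y
  have hmono : finrank K (G ⊓ commonImagePreimage b : Submodule K V) ≤
      finrank K (F ⊓ commonImagePreimage b : Submodule K V) :=
    Submodule.finrank_mono (inf_le_inf_right _ inf_le_left)
  have hchoose := Nat.choose_le_choose 2 (show finrank K P ≤ s by omega)
  rw [hPT] at hchain
  rw [add_one_choose_two]
  omega

theorem IsSymplecticProduct.finrank_orthogonalCentralizer_le (h : IsSymplecticProduct b θ)
    (hX : IsGeneralPoint b θ X) (hr : transverseRank b X ≠ 0) {s : ℕ}
    (hs : genericRank b = transverseRank b X + s + 1) (hsr : 2 * s ≤ transverseRank b X) :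
    finrank K (orthogonalCentralizer b θ X) ≤
      transverseRank b X * s + (s + 1).choose 2 + finrank K (LinearMap.ker b) := by
  have hF := h.finrank_orthogonalCentralizer_add_choose_two_le hX hs
  by_cases hN : commonImagePreimage b ≤ LinearMap.ker b
  · have := Submodule.finrank_mono ((inf_le_right (a := orthogonalCentralizer b θ X)).trans hN)
    omega
  obtain ⟨κ, hκ⟩ := Nat.exists_eq_add_one.2 (hX.finrank_map_commonImagePreimage_pos hN)
  have hFN := h.finrank_inf_commonImagePreimage_le hX hN hκ
  have hmapT : finrank K ((commonImagePreimage b).map (b X)) ≤ finrank K (commonImage b) :=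
    Submodule.finrank_mono <| Submodule.map_le_iff_le_comap.2 fun u hu =>
      mem_commonImagePreimage.1 hu X
  have hT := hX.finrank_commonImage_add_lt h.isAlt hr
  have hTker := finrank_le_finrank_inf_ker_add_one (commonImage b) (θ X)
  obtain ⟨d, rfl⟩ : ∃ d, s = κ + 1 + d := Nat.exists_eq_add_of_le (by omega)
  have hchoose := Nat.choose_le_choose 2
    (show κ ≤ finrank K (commonImage b ⊓ LinearMap.ker (θ X) : Submodule K V) by omega)
  have hcodim : genericRank b - (κ + 1) = transverseRank b X + d + 1 := by omega
  rw [hcodim, add_one_choose_two] at hFN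
  have hmul : κ + (transverseRank b X + d + 1) * κ ≤ transverseRank b X * (κ + 1 + d) := by
    nlinarith [Nat.mul_le_mul_right (d + 1) hsr]
  omega

end CentralizerEstimate

section MainEstimate

theorem choose_two_add (m n : ℕ) : (m + n).choose 2 = m.choose 2 + n.choose 2 + m * n := by
  induction n with
  | zero => simp
  | succ n ih =>
    rw [← add_assoc, add_one_choose_two, ih, add_one_choose_two]
    ring

variable {K V : Type*} [Field K] [AddCommGroup V] [Module K V] {b : V →ₗ[K] V →ₗ[K] V}
  {θ : LinearMap.BilinForm K V} [FiniteDimensional K V] [Infinite K]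

theorem IsSymplecticProduct.finrank_map₂_add_finrank_le [NeZero (3 : K)]
    (h : IsSymplecticProduct b θ) :
    finrank K (Submodule.map₂ b ⊤ ⊤) + finrank K V ≤
      2 * genericRank b + (genericRank b + 1).choose 2 + finrank K (LinearMap.ker b) := by
  rcases eq_or_ne b 0 with rfl | hb
  · have hbot : Submodule.map₂ (0 : V →ₗ[K] V →ₗ[K] V) ⊤ ⊤ = ⊥ :=
      eq_bot_iff.2 (Submodule.map₂_le.2 fun _ _ _ _ => rfl)
    rw [hbot, finrank_bot, LinearMap.ker_zero, finrank_top]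
    omega
  obtain ⟨X, hX⟩ := h.exists_isGeneralPoint hb
  have hD := hX.isRegularPoint.finrank_map₂_top_le_add h.isAlt
  obtain ⟨s, hs⟩ : ∃ s, genericRank b = transverseRank b X + s + 1 :=
    Nat.exists_eq_add_of_lt <| (Nat.le_add_left _ _).trans_lt
      (h.finrank_map_orthogonalCentralizer_add_lt hX 0)
  have hk : (genericRank b + 1).choose 2 = (transverseRank b X + 1).choose 2 +
      (s + 1).choose 2 + transverseRank b X * s + genericRank b := by
    rw [hs, show transverseRank b X + s + 1 + 1 = transverseRank b X + 1 + (s + 1) by ring,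
      choose_two_add]
    ring
  by_cases hr : transverseRank b X ≠ 0 ∧ 2 * s ≤ transverseRank b X
  · have hF := h.finrank_orthogonalCentralizer_le hX hr.1 hs hr.2
    have hV := h.finrank_le_finrank_orthogonalCentralizer_add hX.isRegularPoint
    omega
  · have hDperp := h.finrank_orthogonal_map₂_le hX hs
    have hV := h.finrank_orthogonal_add (Submodule.map₂ b ⊤ ⊤)
    have hchoose : (transverseRank b X + 1).choose 2 ≤ transverseRank b X * s := by
      rw [Nat.choose_two_right, Nat.add_sub_cancel]
      refine Nat.div_le_of_le_mul ?_
      rcases Nat.eq_zero_or_pos (transverseRank b X) with h0 | hpos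
      · simp [h0]
      · nlinarith [show transverseRank b X + 1 ≤ 2 * s by omega]
    omega

end MainEstimate

theorem exists_isCompl_finrank_eq {K V : Type*} [Field K] [AddCommGroup V] [Module K V]
    [FiniteDimensional K V] {D Z : Submodule K V} (hDZ : D ≤ Z) {m : ℕ}
    (hm : finrank K D + finrank K V ≤ m + finrank K Z) (hmV : m ≤ finrank K V) :
    ∃ I J : Submodule K V, D ≤ I ∧ J ≤ Z ∧ IsCompl I J ∧ finrank K I = m := by
  obtain ⟨C, hDC, hC⟩ := IsModularLattice.exists_disjoint_and_sup_eq hDZ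
  have hCdim := Submodule.finrank_sup_add_finrank_inf_eq D C
  rw [hC, hDC.eq_bot, finrank_bot] at hCdim
  obtain ⟨v, hv⟩ := exists_linearIndependent_of_le_finrank
    (show finrank K V - m ≤ finrank K C by omega)
  have hvV : LinearIndependent K (C.subtype ∘ v) := hv.map' C.subtype C.ker_subtype
  have hJC : Submodule.span K (Set.range (C.subtype ∘ v)) ≤ C :=
    Submodule.span_le.2 (Set.range_subset_iff.2 fun i => (v i).2)
  obtain ⟨I, hDI, hIJ⟩ := (hDC.mono_right hJC).exists_isCompl
  refine ⟨I, _, hDI, hJC.trans (le_sup_right.trans_eq hC), hIJ, ?_⟩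
  have hdim := Submodule.finrank_add_eq_of_isCompl hIJ
  rw [finrank_span_eq_card hvV, Fintype.card_fin] at hdim
  omega

section LieAlgebra

variable {K g : Type*} [Field K] [LieRing g] [LieAlgebra K g]

theorem toSubmodule_derivedSeries_one_eq_map₂ :
    (LieAlgebra.derivedSeries K g 1).toSubmodule =
      Submodule.map₂ (LieAlgebra.ad K g : g →ₗ[K] Module.End K g) ⊤ ⊤ := by
  refine (LieAlgebra.coe_derivedSeries_one_eq K g).trans ?_
  rw [Submodule.map₂_eq_span_image2]
  congr
  ext z
  simp

theorem toSubmodule_center_eq_ker :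
    (LieAlgebra.center K g).toSubmodule =
      LinearMap.ker (LieAlgebra.ad K g : g →ₗ[K] Module.End K g) := by
  rw [← LieAlgebra.self_module_ker_eq_center]
  rfl

theorem exists_lieIdeal_isCompl_finrank_eq [FiniteDimensional K g]
    (hg : LieAlgebra.derivedSeries K g 1 ≤ LieAlgebra.center K g) {m : ℕ}
    (hm : finrank K (LieAlgebra.derivedSeries K g 1) + finrank K g ≤
      m + finrank K (LieAlgebra.center K g)) (hmg : m ≤ finrank K g) :
    ∃ I J : LieIdeal K g, IsCompl I J ∧ J ≤ LieAlgebra.center K g ∧ finrank K I = m := by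
  obtain ⟨I, J, hDI, hJZ, hIJ, hI⟩ := exists_isCompl_finrank_eq
    ((LieSubmodule.toSubmodule_le_toSubmodule _ _).2 hg) hm hmg
  let I' : LieIdeal K g := { I with
    lie_mem := fun {x y} _ => hDI <| (toSubmodule_derivedSeries_one_eq_map₂ (K := K) (g := g)).ge <|
      Submodule.apply_mem_map₂ _ trivial trivial }
  let J' : LieIdeal K g := { J with
    lie_mem := fun {x y} hy => (hJZ hy x).symm ▸ J.zero_mem }
  exact ⟨I', J', LieSubmodule.isCompl_toSubmodule.1 hIJ, hJZ, hI⟩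

theorem decomposable_of_charSeqTwos_symplectic_of_large_dim_general [Infinite K] [NeZero (3 : K)]
    [FiniteDimensional K g] {k : ℕ}
    (hg : LieAlgebra.derivedSeries K g 1 ≤ LieAlgebra.center K g)
    (hk : ∀ X, finrank K (LinearMap.range (LieAlgebra.ad K g X)) ≤ k)
    (hdim : finrank K g > k * (k + 5) / 2) {θ : LinearMap.BilinForm K g} (hθ : θ.IsAlt)
    (hnondeg : θ.Nondegenerate)
    (hclosed : ∀ X Y Z : g, θ ⁅X, Y⁆ Z + θ ⁅Y, Z⁆ X + θ ⁅Z, X⁆ Y = 0) :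
    ∃ I J : LieIdeal K g, I ⊓ J = ⊥ ∧ I ⊔ J = ⊤ ∧ finrank K I = k * (k + 5) / 2 ∧ J ≠ ⊥ ∧
      ∀ x ∈ J, ∀ y ∈ J, ⁅x, y⁆ = (0 : g) := by
  have hsymp : IsSymplecticProduct (LieAlgebra.ad K g : g →ₗ[K] Module.End K g) θ :=
    ⟨lie_self, hθ, hnondeg, hclosed⟩
  have hmain := hsymp.finrank_map₂_add_finrank_le
  rw [← toSubmodule_derivedSeries_one_eq_map₂, ← toSubmodule_center_eq_ker] at hmain
  have hrank : genericRank (LieAlgebra.ad K g : g →ₗ[K] Module.End K g) ≤ k := ciSup_le hk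
  have hchoose := Nat.choose_le_choose 2 (Nat.add_le_add_right hrank 1)
  have hformula : k * (k + 5) / 2 = 2 * k + (k + 1).choose 2 := by
    have hsplit : k * (k + 5) = (k + 1) * k + 2 * k * 2 := by ring
    rw [Nat.choose_two_right, Nat.add_sub_cancel, hsplit,
      Nat.add_mul_div_right _ _ two_pos, add_comm]
  have hm : finrank K (LieAlgebra.derivedSeries K g 1).toSubmodule + finrank K g ≤
      k * (k + 5) / 2 + finrank K (LieAlgebra.center K g).toSubmodule := by
    omega
  obtain ⟨I, J, hIJ, hJ, hI⟩ := exists_lieIdeal_isCompl_finrank_eq hg hm hdim.le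
  refine ⟨I, J, hIJ.inf_eq_bot, hIJ.sup_eq_top, hI, ?_, fun x _ y hy => hJ hy x⟩
  rintro rfl
  rw [eq_top_of_isCompl_bot hIJ] at hI
  exact hdim.ne' (finrank_top K g ▸ hI)

end LieAlgebra

theorem IsSymplecticForm.exists_bilinForm {K : Type*} [RCLike K] {g : Type*} [LieRing g]
    [LieAlgebra K g] {θ : g → g → K} (hθ : IsSymplecticForm K g θ) :
    ∃ Θ : LinearMap.BilinForm K g, Θ.IsAlt ∧ Θ.Nondegenerate ∧
      ∀ X Y Z : g, Θ ⁅X, Y⁆ Z + Θ ⁅Y, Z⁆ X + Θ ⁅Z, X⁆ Y = 0 := by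
  obtain ⟨hleft, hright, halt, hnondeg, hclosed⟩ := hθ
  have hzero_left : ∀ Z, θ 0 Z = 0 := fun Z => by simpa using hleft 1 0 0 Z
  have hzero_right : ∀ Z, θ Z 0 = 0 := fun Z => by simpa using hright 1 Z 0 0
  let Θ : LinearMap.BilinForm K g := LinearMap.mk₂ K θ
    (fun X Y Z => by simpa using hleft 1 X Y Z)
    (fun a X Y => by simpa [hzero_left] using hleft a X 0 Y)
    (fun X Y Z => by simpa using hright 1 X Y Z)
    (fun a X Y => by simpa [hzero_right] using hright a X Y 0)
  have hΘ : Θ.IsAlt := halt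
  exact ⟨Θ, hΘ, hΘ.isRefl.nondegenerate_iff_separatingLeft.2 hnondeg, hclosed⟩

theorem IsTwoStepNilpotent.derivedSeries_one_le_center (K : Type*) [Field K] {g : Type*}
    [LieRing g] [LieAlgebra K g] (hg : IsTwoStepNilpotent g) :
    LieAlgebra.derivedSeries K g 1 ≤ LieAlgebra.center K g := by
  rw [← LieSubmodule.toSubmodule_le_toSubmodule, toSubmodule_derivedSeries_one_eq_map₂,
    toSubmodule_center_eq_ker, Submodule.map₂_le]
  exact fun X _ Y _ => LinearMap.ext (hg.1 X Y)

theorem HasCharSeqTwos.finrank_range_ad_le_s18 {K : Type*} [RCLike K] {g : Type*} [LieRing g]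
    [LieAlgebra K g] {k : ℕ} (hk : HasCharSeqTwos K g k)
    (hg : LieAlgebra.derivedSeries K g 1 ≤ LieAlgebra.center K g) (X : g) :
    finrank K (LinearMap.range (LieAlgebra.ad K g X)) ≤ k := by
  by_cases hX : X ∈ LieAlgebra.derivedSeries K g 1
  · have hker : X ∈ (LieAlgebra.center K g).toSubmodule := hg hX
    rw [toSubmodule_center_eq_ker] at hker
    have had : LieAlgebra.ad K g X = 0 := hker
    rw [had, LinearMap.range_zero, finrank_bot]
    exact Nat.zero_le k
  · exact hk.1 X hX

/-- Let `g` be a 2-step nilpotent symplectic Lie algebra over `K` with characteristic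
sequence `(2,…,2,1,…,1)` containing exactly `k` twos. If `dim g > k(k+5)/2` then `g` is
decomposable: it is the direct product of a Lie algebra of dimension `k(k+5)/2` with a
nonzero abelian ideal. -/
theorem decomposable_of_charSeqTwos_symplectic_of_large_dim
    (K : Type*) [RCLike K] (g : Type*) [LieRing g] [LieAlgebra K g] [FiniteDimensional K g]
    (k : ℕ) (h2 : IsTwoStepNilpotent g) (hc : HasCharSeqTwos K g k)
    (hdim : Module.finrank K g > k * (k + 5) / 2)
    (θ : g → g → K) (hθ : IsSymplecticForm K g θ) :
    ∃ I J : LieIdeal K g, I ⊓ J = ⊥ ∧ I ⊔ J = ⊤ ∧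
      Module.finrank K ↥I = k * (k + 5) / 2 ∧ J ≠ ⊥ ∧
      (∀ x ∈ J, ∀ y ∈ J, ⁅x, y⁆ = (0 : g)) := by
  obtain ⟨Θ, hΘ, hnondeg, hclosed⟩ := hθ.exists_bilinForm
  have hg := h2.derivedSeries_one_le_center K
  exact decomposable_of_charSeqTwos_symplectic_of_large_dim_general hg (hc.finrank_range_ad_le_s18 hg)
    hdim hΘ hnondeg hclosed
end
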